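/- arXiv:2511.04891 — 2 statements merged into one kernel-verified Lean document; each statement's English description precedes it below -/
import Mathlib

section
/- There exist an allocation A = (A_1,…,A_n) of the indivisible items and payments p_1,…,p_n ≥ 0 with Σ_{i=1}^n p_i = 1 such that {(A_i, p_i)}_{i∈N} is EFM with money; that is, with indivisible goods and chores together with one unit of money, an EFM allocation always exists. -/
/-!
If some agent values a good together with a chore positively, merge the chore into the good; the
result is still a good. So suppose that a good together with a chore is never worth more than `0`
to anybody, and hand out the items in rounds of maximal total utility. With `n` agents and `m`
chores the first round hands out `m % n` chores, each to a different agent and possibly together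
with one good. In each of the following rounds every agent gets a chore, possibly together with one
good, until only goods are left, which are then handed out in rounds with at most one good per
agent.

Since the rounds are optimal, an agent likes what she gets in a round at least as much as what
another agent gets in the next one; where goods follow chores, this holds once her chore is
discarded. After the first round this also covers an agent who got nothing, because a package with a
chore is worth at most `0`. For the same reason nobody is envied for the first round. So all envy
is due to a single item: the last chore of the envious agent or the first good of the envied one.

A round of maximal total utility cannot be improved by permuting its bundles, and this property is
additive over the rounds. By a theorem of Halpern and Shah, payments `q i` then exist which make
the whole allocation envy-free. Lowering them to `max (q i - c) 0` for a level `c` adjusts the total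
payment to the budget, and nobody envies an agent whose payment is still positive.
-/

namespace FairDivision

open Finset Function

variable {N I K : Type*}

section Potential

variable [AddCommGroup K]

/-- The total weight of the path that starts at `i` and then visits the vertices of `l`, where the
edge from `a` to `b` weighs `d a b`. -/
def pathWeight (d : N → N → K) (i : N) (l : List N) : K :=
  ((i :: l).zipWith d l).sum

lemma pathWeight_cons (d : N → N → K) (i j : N) (l : List N) :
    pathWeight d i (j :: l) = d i j + pathWeight d j l := by
  simp [pathWeight]

lemma pathWeight_append_cons (d : N → N → K) (i k : N) (l l' : List N) :
    pathWeight d i (l ++ k :: l') = pathWeight d i (l ++ [k]) + pathWeight d k l' := by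
  induction l generalizing i with
  | nil => simp [pathWeight]
  | cons j l ih => simp only [List.cons_append, pathWeight_cons, ih, add_assoc]

lemma map_formPerm_self [DecidableEq N] {l : List N} (hl : l.Nodup) :
    l.map l.formPerm = l.rotate 1 :=
  List.ext_getElem (by simp) fun k _ _ ↦ by
    simp [List.formPerm_apply_getElem _ hl, List.getElem_rotate]

lemma pathWeight_cycle [DecidableEq N] (d : N → N → K) {a : N} {l : List N}
    (hl : (a :: l).Nodup) :
    pathWeight d a (l ++ [a]) = ∑ i ∈ (a :: l).toFinset, d i ((a :: l).formPerm i) := by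
  have hmap : l ++ [a] = (a :: l).map (a :: l).formPerm := by
    rw [map_formPerm_self hl, List.rotate_cons_succ, List.rotate_zero]
  calc pathWeight d a (l ++ [a])
      = (((a :: l) ++ [a]).zipWith d ((l ++ [a]) ++ [])).sum := by simp [pathWeight]
    _ = ((a :: l).zipWith d (l ++ [a])).sum := by
        rw [List.zipWith_append (by simp), List.zipWith_nil_right, List.append_nil]
    _ = _ := by
        rw [hmap, List.zipWith_map_right, List.zipWith_self, List.sum_toFinset _ hl]

variable [LinearOrder K]

lemma exists_max_pathWeight [Finite N] (d : N → N → K) (i : N) :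
    ∃ l, (i :: l).Nodup ∧ ∀ l', (i :: l').Nodup → pathWeight d i l' ≤ pathWeight d i l := by
  have := Fintype.ofFinite N
  have hfin : {l : List N | (i :: l).Nodup}.Finite :=
    (List.finite_length_le N (Fintype.card N)).subset fun l hl ↦
      (List.nodup_cons.1 hl).2.length_le_card
  exact Set.exists_max_image _ (pathWeight d i) hfin ⟨[], List.nodup_singleton i⟩

variable [Fintype N] {d : N → N → K}

lemma pathWeight_cycle_nonpos (hdiag : ∀ i, d i i = 0)
    (hperm : ∀ π : Equiv.Perm N, ∑ i, d i (π i) ≤ 0) {a : N} {l : List N}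
    (hl : (a :: l).Nodup) : pathWeight d a (l ++ [a]) ≤ 0 := by
  classical
  rw [pathWeight_cycle d hl]
  refine (sum_subset (subset_univ _) fun i _ hi ↦ ?_).trans_le (hperm (a :: l).formPerm)
  rw [List.formPerm_apply_of_notMem (by simpa using hi), hdiag]

/- The potential of `i` is the largest weight of a simple path from `i`. A path which returns to `i`
contains a cycle at `i`, and removing that cycle does not decrease the weight. -/
theorem exists_potential [IsOrderedAddMonoid K] (hdiag : ∀ i, d i i = 0)
    (hperm : ∀ π : Equiv.Perm N, ∑ i, d i (π i) ≤ 0) :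
    ∃ q : N → K, ∀ i j, d i j + q j ≤ q i := by
  choose path nodup_path le_path using exists_max_pathWeight d
  refine ⟨fun i ↦ pathWeight d i (path i), fun i j ↦ ?_⟩
  rw [← pathWeight_cons]
  by_cases hi : i ∈ j :: path j
  · obtain ⟨l, l', hsplit⟩ := List.append_of_mem hi
    have hnodup : (l ++ i :: l').Nodup := hsplit ▸ nodup_path j
    have hcycle : (i :: l).Nodup :=
      (List.nodup_middle.1 hnodup).sublist ((List.sublist_append_left l l').cons_cons i)
    have htail : (i :: l').Nodup := hnodup.of_append_right
    calc pathWeight d i (j :: path j)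
        = pathWeight d i (l ++ [i]) + pathWeight d i l' := by
          rw [hsplit, pathWeight_append_cons]
      _ ≤ 0 + pathWeight d i (path i) :=
          add_le_add (pathWeight_cycle_nonpos hdiag hperm hcycle) (le_path i l' htail)
      _ = pathWeight d i (path i) := zero_add _
  · exact le_path i _ (List.nodup_cons.2 ⟨hi, nodup_path j⟩)

end Potential

section WaterFilling

variable [Field K] [LinearOrder K] [IsStrictOrderedRing K] [Fintype N] [Nonempty N]

/- For a nonempty set `T` of agents let `level T` be the water level at which `T` holds exactly `b`.
The largest of these levels is the required one. -/
lemma exists_sum_max_sub_eq (q : N → K) {b : K} (hb : 0 ≤ b) :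
    ∃ c, ∑ i, max (q i - c) 0 = b := by
  classical
  let level (T : Finset N) : K := (∑ i ∈ T, q i - b) / #T
  have sum_sub (T : Finset N) (hT : T.Nonempty) (c : K) :
      ∑ i ∈ T, (q i - c) = b + #T * (level T - c) := by
    have : (#T : K) ≠ 0 := by exact_mod_cast hT.card_ne_zero
    rw [sum_sub_distrib, sum_const, nsmul_eq_mul]
    simp only [level]
    field_simp
    ring
  obtain ⟨S, hS, hmax⟩ := exists_max_image ({T | T.Nonempty} : Finset (Finset N)) level
    ⟨univ, by simp⟩
  simp only [mem_filter, mem_univ, true_and] at hS hmax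
  refine ⟨level S, le_antisymm ?_ ?_⟩
  · rw [sum_congr rfl fun i _ ↦ max_def' (q i - level S) 0, ← sum_filter]
    rcases eq_empty_or_nonempty {i | 0 ≤ q i - level S} with hempty | hT
    · rwa [hempty, sum_empty]
    · rw [sum_sub _ hT]
      have := mul_nonneg (Nat.cast_nonneg (α := K) #{i | 0 ≤ q i - level S})
        (sub_nonneg.2 (hmax _ hT))
      linarith
  · calc b = ∑ i ∈ S, (q i - level S) := by simp [sum_sub S hS]
      _ ≤ ∑ i ∈ S, max (q i - level S) 0 := sum_le_sum fun i _ ↦ le_max_left _ _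
      _ ≤ ∑ i, max (q i - level S) 0 :=
        sum_le_univ_sum_of_nonneg fun i ↦ le_max_right _ _

end WaterFilling

section Allocation

/-- `A` divides the items of `S` among the agents of `N`. -/
structure IsAllocation [Fintype N] [DecidableEq I] (S : Finset I) (A : N → Finset I) : Prop where
  disjoint : Pairwise (Disjoint on A)
  biUnion_eq : univ.biUnion A = S

/-- An allocation is envy-freeable if no reassignment of its bundles increases the total utility.
This is the characterization by Halpern and Shah of the allocations which some payments make
envy-free. -/
def EnvyFreeable [Fintype N] [AddCommMonoid K] [LE K] (v : N → I → K) (A : N → Finset I) : Prop :=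
  ∀ π : Equiv.Perm N, ∑ i, ∑ t ∈ A (π i), v i t ≤ ∑ i, ∑ t ∈ A i, v i t

/-- Envy-freeness up to one item, where an agent may only discard an item of her own outside `G` or
an item of the envied agent inside `G`. Here `G` is the set of the goods, and the other items are
chores. -/
def IsEF1 [DecidableEq I] [AddCommMonoid K] [LE K] (G : Finset I) (v : N → I → K)
    (A : N → Finset I) : Prop :=
  ∀ i j, ∑ t ∈ A j, v i t ≤ ∑ t ∈ A i, v i t ∨
    (∃ c ∈ A i \ G, ∑ t ∈ A j, v i t ≤ ∑ t ∈ (A i).erase c, v i t) ∨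
    ∃ g ∈ A j ∩ G, ∑ t ∈ (A j).erase g, v i t ≤ ∑ t ∈ A i, v i t

variable [Fintype N] [DecidableEq I]

namespace IsAllocation

variable {S T : Finset I} {A B : N → Finset I}

lemma subset (hA : IsAllocation S A) (i : N) : A i ⊆ S :=
  hA.biUnion_eq ▸ subset_biUnion_of_mem A (mem_univ i)

lemma union (hA : IsAllocation S A) (hB : IsAllocation T B) (hST : Disjoint S T) :
    IsAllocation (S ∪ T) fun i ↦ A i ∪ B i where
  disjoint i j hij := by
    have hAB (i j : N) : Disjoint (A i) (B j) := hST.mono (hA.subset i) (hB.subset j)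
    simp only [Function.onFun, disjoint_union_left, disjoint_union_right]
    exact ⟨⟨hA.disjoint hij, (hAB j i).symm⟩, hAB i j, hB.disjoint hij⟩
  biUnion_eq := by
    rw [← hA.biUnion_eq, ← hB.biUnion_eq]
    ext t
    simp [exists_or]

end IsAllocation

lemma EnvyFreeable.union [AddCommMonoid K] [PartialOrder K] [IsOrderedAddMonoid K]
    {v : N → I → K} {A B : N → Finset I} (hA : EnvyFreeable v A) (hB : EnvyFreeable v B)
    (hAB : ∀ i, Disjoint (A i) (B i)) : EnvyFreeable v fun i ↦ A i ∪ B i := fun π ↦ by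
  simp only [sum_union (hAB _), sum_add_distrib]
  exact add_le_add (hA π) (hB π)

end Allocation

section Payment

variable [Fintype N] {v : N → I → K} {A : N → Finset I}

theorem EnvyFreeable.exists_subsidy [AddCommGroup K] [LinearOrder K] [IsOrderedAddMonoid K]
    (hA : EnvyFreeable v A) :
    ∃ q : N → K, ∀ i j, ∑ t ∈ A j, v i t + q j ≤ ∑ t ∈ A i, v i t + q i := by
  obtain ⟨q, hq⟩ := exists_potential (d := fun i j ↦ ∑ t ∈ A j, v i t - ∑ t ∈ A i, v i t)
    (fun i ↦ sub_self _) fun π ↦ by simpa only [sum_sub_distrib, sub_nonpos] using hA π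
  exact ⟨q, fun i j ↦ by have := hq i j; grind⟩

theorem EnvyFreeable.exists_payment [Field K] [LinearOrder K] [IsStrictOrderedRing K] [Nonempty N]
    (hA : EnvyFreeable v A) {b : K} (hb : 0 ≤ b) :
    ∃ p : N → K, (∀ i, 0 ≤ p i) ∧ ∑ i, p i = b ∧
      ∀ i j, p j = 0 ∨ ∑ t ∈ A j, v i t + p j ≤ ∑ t ∈ A i, v i t + p i := by
  obtain ⟨q, hq⟩ := hA.exists_subsidy
  obtain ⟨c, hc⟩ := exists_sum_max_sub_eq q hb
  refine ⟨fun i ↦ max (q i - c) 0, fun i ↦ le_max_right _ _, hc, fun i j ↦ ?_⟩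
  rcases le_total (q j - c) 0 with hj | hj
  · exact .inl (max_eq_right hj)
  · right
    beta_reduce
    rw [max_eq_left hj]
    linarith [hq i j, le_max_left (q i - c) 0]

end Payment

section Round

variable [Fintype N] [DecidableEq I]

/-- A round hands out disjoint packages of available items, at most one to every agent: `S` is the
set of the available items, `𝓟` says which sets are packages, and `k` is the number of
chores (items outside `G`) handed out in total. -/
structure IsRound (G S : Finset I) (𝓟 : Finset I → Prop) (k : ℕ) (y : N → Finset I) : Prop where
  disjoint : Pairwise (Disjoint on y)
  subset : ∀ i, y i ⊆ S
  package : ∀ i, 𝓟 (y i)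
  sum_card : ∑ i, #(y i \ G) = k

/-- A round of the largest total utility among the rounds of its kind. -/
structure IsOptimalRound [AddCommMonoid K] [LE K] (v : N → I → K) (G S : Finset I)
    (𝓟 : Finset I → Prop) (k : ℕ) (y : N → Finset I) : Prop extends IsRound G S 𝓟 k y where
  le_welfare : ∀ z, IsRound G S 𝓟 k z → ∑ i, ∑ t ∈ z i, v i t ≤ ∑ i, ∑ t ∈ y i, v i t

variable {G S : Finset I} {𝓟 : Finset I → Prop} {k : ℕ} {y : N → Finset I}

namespace IsRound

lemma comp_perm (hy : IsRound G S 𝓟 k y) (π : Equiv.Perm N) : IsRound G S 𝓟 k (y ∘ π) where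
  disjoint := hy.disjoint.comp_of_injective π.injective
  subset i := hy.subset (π i)
  package i := hy.package (π i)
  sum_card := (Equiv.sum_comp π fun i ↦ #(y i \ G)).trans hy.sum_card

lemma update [DecidableEq N] (hy : IsRound G S 𝓟 k y) {i : N} {B : Finset I} (hBS : B ⊆ S)
    (hB : 𝓟 B) (hcard : #(B \ G) = #(y i \ G)) (hdisj : ∀ j ≠ i, Disjoint B (y j)) :
    IsRound G S 𝓟 k (update y i B) where
  disjoint := by
    intro a b hab
    simp only [Function.onFun, update_apply]
    split_ifs with ha hb hb
    · exact absurd (ha.trans hb.symm) hab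
    · exact hdisj b hb
    · exact (hdisj a ha).symm
    · exact hy.disjoint hab
  subset := (forall_update_iff y fun _ X ↦ X ⊆ S).2 ⟨hBS, fun j _ ↦ hy.subset j⟩
  package := (forall_update_iff y fun _ X ↦ 𝓟 X).2 ⟨hB, fun j _ ↦ hy.package j⟩
  sum_card := by
    rw [← hy.sum_card]
    refine sum_congr rfl fun j _ ↦ ?_
    rcases eq_or_ne j i with rfl | hj
    · rw [update_self, hcard]
    · rw [update_of_ne hj]

lemma biUnion_subset (hy : IsRound G S 𝓟 k y) : univ.biUnion y ⊆ S :=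
  Finset.biUnion_subset.2 fun i _ ↦ hy.subset i

lemma isAllocation_union (hy : IsRound G S 𝓟 k y) {A : N → Finset I}
    (hA : IsAllocation (S \ univ.biUnion y) A) : IsAllocation S fun i ↦ y i ∪ A i := by
  have hyA : IsAllocation (univ.biUnion y) y := ⟨hy.disjoint, rfl⟩
  simpa only [union_sdiff_of_subset hy.biUnion_subset] using hyA.union hA disjoint_sdiff

lemma card_sdiff_biUnion (hy : IsRound G S 𝓟 k y) :
    #((S \ univ.biUnion y) \ G) + k = #(S \ G) := by
  have hcard : #(univ.biUnion y \ G) = k := by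
    rw [← hy.sum_card, ← card_biUnion fun i _ j _ hij ↦ (hy.disjoint hij).mono sdiff_le sdiff_le]
    congr 1
    ext t
    simp
  have hsdiff : (S \ univ.biUnion y) \ G = (S \ G) \ (univ.biUnion y \ G) := by grind
  rw [← hcard, hsdiff, card_sdiff_add_card_eq_card (sdiff_subset_sdiff hy.biUnion_subset le_rfl)]

end IsRound

lemma disjoint_of_subset_sdiff_biUnion {B : Finset I} (hB : B ⊆ S \ univ.biUnion y) (i : N) :
    Disjoint B (y i) :=
  disjoint_of_subset_left hB
    (sdiff_disjoint.mono_right (subset_biUnion_of_mem y (mem_univ i)))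

lemma IsAllocation.sum_union_round [AddCommMonoid K] {A : N → Finset I}
    (hA : IsAllocation (S \ univ.biUnion y) A) (w : I → K) (i : N) :
    ∑ t ∈ y i ∪ A i, w t = ∑ t ∈ y i, w t + ∑ t ∈ A i, w t :=
  sum_union (disjoint_of_subset_sdiff_biUnion (hA.subset i) i).symm

lemma exists_isOptimalRound [AddCommMonoid K] [LinearOrder K] (v : N → I → K)
    (h : ∃ y : N → Finset I, IsRound G S 𝓟 k y) : ∃ y, IsOptimalRound v G S 𝓟 k y := by
  have hfin : {y : N → Finset I | IsRound G S 𝓟 k y}.Finite :=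
    (Set.Finite.pi' fun _ ↦ S.powerset.finite_toSet).subset fun y hy i ↦ by
      simpa using hy.subset i
  obtain ⟨y, hy, hmax⟩ := Set.exists_max_image _ (fun y ↦ ∑ i, ∑ t ∈ y i, v i t) hfin h
  exact ⟨y, hy, hmax⟩

namespace IsOptimalRound

variable [AddCommGroup K] [LinearOrder K] {v : N → I → K}

lemma envyFreeable (hy : IsOptimalRound v G S 𝓟 k y) : EnvyFreeable v y :=
  fun π ↦ hy.le_welfare _ (hy.comp_perm π)

variable [IsOrderedAddMonoid K]

lemma envyFreeable_union (hy : IsOptimalRound v G S 𝓟 k y) {A : N → Finset I}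
    (hA : IsAllocation (S \ univ.biUnion y) A) (hvA : EnvyFreeable v A) :
    EnvyFreeable v fun i ↦ y i ∪ A i :=
  hy.envyFreeable.union hvA fun i ↦ (disjoint_of_subset_sdiff_biUnion (hA.subset i) i).symm

lemma sum_le (hy : IsOptimalRound v G S 𝓟 k y) {i : N} {B : Finset I}
    (hBS : B ⊆ S) (hB : 𝓟 B) (hcard : #(B \ G) = #(y i \ G))
    (hdisj : ∀ j ≠ i, Disjoint B (y j)) : ∑ t ∈ B, v i t ≤ ∑ t ∈ y i, v i t := by
  classical
  have hle := hy.le_welfare _ (hy.update hBS hB hcard hdisj)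
  have hrest : ∑ j ∈ univ.erase i, ∑ t ∈ update y i B j, v j t =
      ∑ j ∈ univ.erase i, ∑ t ∈ y j, v j t :=
    sum_congr rfl fun j hj ↦ by rw [update_of_ne (ne_of_mem_erase hj)]
  rw [← add_sum_erase _ _ (mem_univ i), hrest, ← add_sum_erase _ _ (mem_univ i)] at hle
  simpa only [update_self, add_le_add_iff_right] using hle

lemma sum_le_of_subset_sdiff (hy : IsOptimalRound v G S 𝓟 k y) {i : N} {B : Finset I}
    (hBS : B ⊆ S \ univ.biUnion y) (hB : 𝓟 B) (hcard : #(B \ G) = #(y i \ G)) :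
    ∑ t ∈ B, v i t ≤ ∑ t ∈ y i, v i t :=
  hy.sum_le (hBS.trans sdiff_subset) hB hcard fun j _ ↦ disjoint_of_subset_sdiff_biUnion hBS j

end IsOptimalRound

end Round

section Package

variable [DecidableEq I]

/-- The packages of the rounds that hand out chores: a package is empty, or a single chore, or a
chore together with one good. -/
structure IsPackage (G B : Finset I) : Prop where
  card_sdiff_le : #(B \ G) ≤ 1
  card_inter_le : #(B ∩ G) ≤ #(B \ G)

variable {G B : Finset I}

lemma IsPackage.card_sdiff_eq_one (hB : IsPackage G B) (hne : (B \ G).Nonempty) :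
    #(B \ G) = 1 :=
  le_antisymm hB.card_sdiff_le hne.card_pos

lemma IsPackage.eq_empty (hB : IsPackage G B) (hempty : B \ G = ∅) : B = ∅ := by
  have hinter : B ∩ G = ∅ := by simpa [hempty] using hB.card_inter_le
  rw [← sdiff_union_inter B G, hempty, hinter, empty_union]

lemma IsPackage.sum_nonpos [AddCommMonoid K] [PartialOrder K] {w : I → K}
    (hB : IsPackage G B) (hchore : ∀ c ∈ B \ G, w c ≤ 0)
    (hpair : ∀ g ∈ B ∩ G, ∀ c ∈ B \ G, w g + w c ≤ 0) : ∑ t ∈ B, w t ≤ 0 := by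
  rcases (B \ G).eq_empty_or_nonempty with hempty | hne
  · rw [hB.eq_empty hempty, sum_empty]
  obtain ⟨c, hc⟩ := card_eq_one.1 (hB.card_sdiff_eq_one hne)
  have hc_mem : c ∈ B \ G := hc ▸ mem_singleton_self c
  have hinter : #(B ∩ G) ≤ 1 := hB.card_inter_le.trans hB.card_sdiff_le
  rw [← sum_inter_add_sum_sdiff B G, hc, sum_singleton]
  rcases (B ∩ G).eq_empty_or_nonempty with hgood | hgood
  · simpa [hgood] using hchore c hc_mem
  · obtain ⟨g, hg⟩ := card_eq_one.1 (le_antisymm hinter hgood.card_pos)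
    rw [hg, sum_singleton]
    exact hpair g (hg ▸ mem_singleton_self g) c hc_mem

variable [Fintype N] {S : Finset I} {k : ℕ}

lemma exists_isRound_isPackage (hkN : k ≤ Fintype.card N) (hkS : k ≤ #(S \ G)) :
    ∃ y : N → Finset I, IsRound G S (IsPackage G) k y := by
  classical
  obtain ⟨M, -, hM⟩ := exists_subset_card_eq (s := (univ : Finset N)) hkN
  obtain ⟨D, hDS, hD⟩ := exists_subset_card_eq hkS
  let chore := equivOfCardEq (hM.trans hD.symm)
  have chore_mem (i : M) : (chore i : I) ∈ S \ G := hDS (chore i).2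
  have hsdiff (i : M) : {(chore i : I)} \ G = {(chore i : I)} :=
    sdiff_eq_self_of_disjoint (disjoint_singleton_left.2 (mem_sdiff.1 (chore_mem i)).2)
  refine ⟨fun i ↦ if hi : i ∈ M then {(chore ⟨i, hi⟩ : I)} else ∅, ?_, fun i ↦ ?_, fun i ↦ ?_, ?_⟩
  · intro i j hij
    simp only [Function.onFun]
    split_ifs with hi hj <;> simp [hij]
  · split_ifs with hi
    · exact singleton_subset_iff.2 (mem_sdiff.1 (chore_mem ⟨i, hi⟩)).1
    · exact empty_subset S
  · split_ifs with hi
    · have := (mem_sdiff.1 (chore_mem ⟨i, hi⟩)).2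
      constructor <;> simp [hsdiff, this]
    · constructor <;> simp
  · rw [← hM, card_eq_sum_ones, ← sum_subset (subset_univ M) fun i _ hi ↦ by simp [hi]]
    exact sum_congr rfl fun i hi ↦ by simp [hi, hsdiff]

lemma IsRound.card_sdiff_eq_one {y : N → Finset I}
    (hy : IsRound G S (IsPackage G) (Fintype.card N) y) (i : N) : #(y i \ G) = 1 := by
  have hle : ∀ j ∈ univ, #(y j \ G) ≤ 1 := fun j _ ↦ (hy.package j).card_sdiff_le
  exact (sum_eq_sum_iff_of_le hle).1 (by simpa using hy.sum_card) i (mem_univ i)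

lemma IsOptimalRound.sum_add_le [AddCommGroup K] [LinearOrder K] [IsOrderedAddMonoid K]
    {v : N → I → K} {y : N → Finset I} (hy : IsOptimalRound v G S (IsPackage G) k y)
    {i : N} {c : I} (hc : c ∈ y i \ G) {X : Finset I} (hXS : X ⊆ S \ univ.biUnion y)
    (hXG : X ⊆ G) (hX : #X ≤ 1) : ∑ t ∈ X, v i t + v i c ≤ ∑ t ∈ y i, v i t := by
  obtain ⟨hcy, hcG⟩ := mem_sdiff.1 hc
  have hsdiff : insert c X \ G = {c} := by grind
  have hinter : insert c X ∩ G = X := by grind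
  have hle := hy.sum_le (i := i) (B := insert c X)
    (insert_subset (hy.subset i hcy) (hXS.trans sdiff_subset))
    ⟨by simp [hsdiff], by simpa [hsdiff, hinter] using hX⟩
    (by rw [hsdiff, card_singleton, (hy.package i).card_sdiff_eq_one ⟨c, hc⟩])
    fun j hj ↦ disjoint_insert_left.2
      ⟨disjoint_left.1 (hy.disjoint hj.symm) hcy, disjoint_of_subset_sdiff_biUnion hXS j⟩
  rwa [sum_insert fun hcX ↦ hcG (hXG hcX), add_comm] at hle

end Package

section RoundRobin

variable [Fintype N] [DecidableEq I] [AddCommGroup K] [LinearOrder K] [IsOrderedAddMonoid K]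
  {G S : Finset I} {v : N → I → K}

lemma IsOptimalRound.sdiff_biUnion_ssubset {y : N → Finset I}
    (hy : IsOptimalRound v S S (#· ≤ 1) 0 y) (hS : S.Nonempty) (hpos : ∀ g ∈ S, ∃ i, 0 < v i g) :
    S \ univ.biUnion y ⊂ S := by
  refine sdiff_subset.ssubset_of_ne fun hleft ↦ ?_
  obtain ⟨g, hg⟩ := hS
  obtain ⟨i, hi⟩ := hpos g hg
  have hempty : y i = ∅ := by
    have hdisj : Disjoint S (y i) := disjoint_of_subset_sdiff_biUnion hleft.ge i
    exact (disjoint_self_iff_empty _).1 (hdisj.mono_left (hy.subset i))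
  have hle := hy.sum_le_of_subset_sdiff (i := i) (B := {g})
    (singleton_subset_iff.2 (hleft.ge hg)) (by simp) (by simp [hempty, hg])
  simp only [hempty, sum_singleton, sum_empty] at hle
  exact hle.not_gt hi

/- Agent `i` compares what she gets in each round with what `j` gets in the round after it, so only
the set `H j` of what `j` gets in the first round can cause envy. -/
theorem exists_allocation_goods (hS : ∀ g ∈ S, ∃ i, 0 < v i g) :
    ∃ A H : N → Finset I, IsAllocation S A ∧ EnvyFreeable v A ∧
      (∀ j, H j ⊆ A j ∧ #(H j) ≤ 1) ∧
      ∀ i j, ∑ t ∈ A j, v i t ≤ ∑ t ∈ A i, v i t + ∑ t ∈ H j, v i t := by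
  induction S using Finset.strongInduction with
  | H S ih =>
    rcases S.eq_empty_or_nonempty with rfl | hne
    · exact ⟨fun _ ↦ ∅, fun _ ↦ ∅, ⟨fun _ _ _ ↦ disjoint_empty_left _, by ext; simp⟩,
        fun _ ↦ le_rfl, by simp, by simp⟩
    obtain ⟨y, hy⟩ := exists_isOptimalRound (G := S) (S := S) (𝓟 := (#· ≤ 1)) (k := 0) v
      ⟨fun _ ↦ ∅, fun _ _ _ ↦ disjoint_empty_left _, by simp, by simp, by simp⟩
    obtain ⟨A, H, hA, hvA, hH, hle⟩ := ih _ (hy.sdiff_biUnion_ssubset hne hS)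
      fun g hg ↦ hS g (sdiff_subset hg)
    refine ⟨fun i ↦ y i ∪ A i, y, hy.isAllocation_union hA, hy.envyFreeable_union hA hvA,
      fun j ↦ ⟨subset_union_left, hy.package j⟩, fun i j ↦ ?_⟩
    have hHS : H j ⊆ S \ univ.biUnion y := (hH j).1.trans (hA.subset j)
    have hshift : ∑ t ∈ H j, v i t ≤ ∑ t ∈ y i, v i t :=
      hy.sum_le_of_subset_sdiff hHS (hH j).2 <| by
        rw [sdiff_eq_empty_iff_subset.2 (hHS.trans sdiff_subset),
          sdiff_eq_empty_iff_subset.2 (hy.subset i)]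
    rw [hA.sum_union_round, hA.sum_union_round]
    grind [hle i j]

/- Here `H j` is the package that `j` gets in the first round, and `c i` is the chore that `i` gets
in the last round with chores. -/
theorem exists_allocation_full_rounds (hG : ∀ g ∈ S ∩ G, ∃ i, 0 < v i g) {m : ℕ}
    (hm : #(S \ G) = Fintype.card N * (m + 1)) :
    ∃ (A H : N → Finset I) (c : N → I), IsAllocation S A ∧ EnvyFreeable v A ∧
      (∀ j, H j ⊆ S ∧ IsPackage G (H j) ∧ #(H j \ G) = 1) ∧ (∀ i, c i ∈ A i \ G) ∧
      ∀ i j, ∑ t ∈ A j, v i t + v i (c i) ≤ ∑ t ∈ A i, v i t + ∑ t ∈ H j, v i t := by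
  induction m generalizing S with
  | zero =>
    obtain ⟨y, hy⟩ := exists_isOptimalRound v
      (exists_isRound_isPackage (N := N) le_rfl (by simp [hm]) : ∃ y, IsRound G S _ _ y)
    have hleft : S \ univ.biUnion y ⊆ G := by
      have := hy.card_sdiff_biUnion
      rw [← sdiff_eq_empty_iff_subset, ← card_eq_zero]
      lia
    obtain ⟨A, H, hA, hvA, hH, hle⟩ := exists_allocation_goods
      fun g hg ↦ hG g (mem_inter.2 ⟨sdiff_subset hg, hleft hg⟩)
    choose c hc using fun i ↦ card_pos.1 (hy.card_sdiff_eq_one i ▸ one_pos)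
    refine ⟨fun i ↦ y i ∪ A i, y, c, hy.isAllocation_union hA, hy.envyFreeable_union hA hvA,
      fun j ↦ ⟨hy.subset j, hy.package j, hy.card_sdiff_eq_one j⟩,
      fun i ↦ sdiff_subset_sdiff subset_union_left le_rfl (hc i), fun i j ↦ ?_⟩
    have hHS := (hH j).1.trans (hA.subset j)
    have hshift := hy.sum_add_le (hc i) hHS (hHS.trans hleft) (hH j).2
    rw [hA.sum_union_round, hA.sum_union_round]
    grind [hle i j]
  | succ m ih =>
    obtain ⟨y, hy⟩ := exists_isOptimalRound v
      (exists_isRound_isPackage (N := N) le_rfl (by simp [hm, mul_add]) : ∃ y, IsRound G S _ _ y)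
    obtain ⟨A, H, c, hA, hvA, hH, hc, hle⟩ := ih (S := S \ univ.biUnion y)
      (fun g hg ↦ hG g (inter_subset_inter_right sdiff_subset hg))
      (by have := hy.card_sdiff_biUnion; grind)
    refine ⟨fun i ↦ y i ∪ A i, y, c, hy.isAllocation_union hA, hy.envyFreeable_union hA hvA,
      fun j ↦ ⟨hy.subset j, hy.package j, hy.card_sdiff_eq_one j⟩,
      fun i ↦ sdiff_subset_sdiff subset_union_right le_rfl (hc i), fun i j ↦ ?_⟩
    obtain ⟨hHS, hH_package, hH_card⟩ := hH j
    have hshift : ∑ t ∈ H j, v i t ≤ ∑ t ∈ y i, v i t :=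
      hy.sum_le_of_subset_sdiff hHS hH_package (by rw [hH_card, hy.card_sdiff_eq_one])
    rw [hA.sum_union_round, hA.sum_union_round]
    grind [hle i j]

end RoundRobin

section FirstRound

variable [Fintype N] [DecidableEq I] [AddCommGroup K] [LinearOrder K] [IsOrderedAddMonoid K]
  {G S : Finset I} {v : N → I → K}

lemma IsOptimalRound.isEF1_union_goods {k : ℕ} {y A H : N → Finset I}
    (hy : IsOptimalRound v G S (IsPackage G) k y)
    (hnonpos : ∀ i B, B ⊆ S → IsPackage G B → ∑ t ∈ B, v i t ≤ 0)
    (hleft : S \ univ.biUnion y ⊆ G) (hA : IsAllocation (S \ univ.biUnion y) A)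
    (hH : ∀ j, H j ⊆ A j ∧ #(H j) ≤ 1)
    (hle : ∀ i j, ∑ t ∈ A j, v i t ≤ ∑ t ∈ A i, v i t + ∑ t ∈ H j, v i t) :
    IsEF1 G v fun i ↦ y i ∪ A i := by
  intro i j
  have hyj := hnonpos i (y j) (hy.subset j) (hy.package j)
  have hij := hle i j
  have hHS := (hH j).1.trans (hA.subset j)
  rcases (y i \ G).eq_empty_or_nonempty with hyi | ⟨c, hc⟩
  · have hvi : ∑ t ∈ y i, v i t = 0 := by rw [(hy.package i).eq_empty hyi, sum_empty]
    rcases (H j).eq_empty_or_nonempty with hHj | hHj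
    · left
      rw [hHj, sum_empty] at hij
      rw [hA.sum_union_round, hA.sum_union_round]
      grind
    · obtain ⟨g, hg⟩ := card_eq_one.1 (le_antisymm (hH j).2 hHj.card_pos)
      have hgH : g ∈ H j := hg ▸ mem_singleton_self g
      have hgA : g ∈ y j ∪ A j := mem_union_right _ ((hH j).1 hgH)
      refine .inr (.inr ⟨g, mem_inter.2 ⟨hgA, hleft (hHS hgH)⟩, ?_⟩)
      rw [hg, sum_singleton] at hij
      rw [sum_erase_eq_sub hgA, hA.sum_union_round, hA.sum_union_round]
      grind
  · have hshift := hy.sum_add_le hc hHS (hHS.trans hleft) (hH j).2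
    have hcA : c ∈ (y i ∪ A i) \ G := sdiff_subset_sdiff subset_union_left le_rfl hc
    refine .inr (.inl ⟨c, hcA, ?_⟩)
    rw [sum_erase_eq_sub (mem_sdiff.1 hcA).1, hA.sum_union_round,
      hA.sum_union_round]
    grind

lemma IsOptimalRound.isEF1_union_chores {k : ℕ} {y A H : N → Finset I} {c : N → I}
    (hy : IsOptimalRound v G S (IsPackage G) k y)
    (hnonpos : ∀ i B, B ⊆ S → IsPackage G B → ∑ t ∈ B, v i t ≤ 0)
    (hA : IsAllocation (S \ univ.biUnion y) A)
    (hH : ∀ j, H j ⊆ S \ univ.biUnion y ∧ IsPackage G (H j) ∧ #(H j \ G) = 1)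
    (hc : ∀ i, c i ∈ A i \ G)
    (hle : ∀ i j, ∑ t ∈ A j, v i t + v i (c i) ≤ ∑ t ∈ A i, v i t + ∑ t ∈ H j, v i t) :
    IsEF1 G v fun i ↦ y i ∪ A i := by
  intro i j
  have hcA : c i ∈ (y i ∪ A i) \ G := sdiff_subset_sdiff subset_union_right le_rfl (hc i)
  refine .inr (.inl ⟨c i, hcA, ?_⟩)
  have hyj := hnonpos i (y j) (hy.subset j) (hy.package j)
  obtain ⟨hHS, hH_package, hH_card⟩ := hH j
  have hshift : ∑ t ∈ H j, v i t ≤ ∑ t ∈ y i, v i t := by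
    rcases (y i \ G).eq_empty_or_nonempty with hyi | hyi
    · rw [(hy.package i).eq_empty hyi, sum_empty]
      exact hnonpos i (H j) (hHS.trans sdiff_subset) hH_package
    · exact hy.sum_le_of_subset_sdiff hHS hH_package
        (by rw [hH_card, (hy.package i).card_sdiff_eq_one hyi])
  rw [sum_erase_eq_sub (mem_sdiff.1 hcA).1, hA.sum_union_round,
    hA.sum_union_round]
  grind [hle i j]

theorem exists_isEF1_of_pair_nonpos [Nonempty N] (hgood : ∀ g ∈ S ∩ G, ∃ i, 0 < v i g)
    (hchore : ∀ i, ∀ c ∈ S \ G, v i c ≤ 0)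
    (hpair : ∀ i, ∀ g ∈ S ∩ G, ∀ c ∈ S \ G, v i g + v i c ≤ 0) :
    ∃ A : N → Finset I, IsAllocation S A ∧ EnvyFreeable v A ∧ IsEF1 G v A := by
  have hnonpos (i : N) (B : Finset I) (hBS : B ⊆ S) (hB : IsPackage G B) :
      ∑ t ∈ B, v i t ≤ 0 :=
    hB.sum_nonpos (fun c hc ↦ hchore i c (sdiff_subset_sdiff hBS le_rfl hc)) fun g hg c hc ↦
      hpair i g (inter_subset_inter_right hBS hg) c (sdiff_subset_sdiff hBS le_rfl hc)
  obtain ⟨y, hy⟩ := exists_isOptimalRound v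
    (exists_isRound_isPackage (N := N) (Nat.mod_lt _ Fintype.card_pos).le (Nat.mod_le #(S \ G) _) :
      ∃ y, IsRound G S _ _ y)
  have hcard : #((S \ univ.biUnion y) \ G) = Fintype.card N * (#(S \ G) / Fintype.card N) := by
    have := hy.card_sdiff_biUnion
    have := Nat.div_add_mod #(S \ G) (Fintype.card N)
    lia
  have hgood' : ∀ g ∈ (S \ univ.biUnion y) ∩ G, ∃ i, 0 < v i g :=
    fun g hg ↦ hgood g (inter_subset_inter_right sdiff_subset hg)
  rcases hm : #(S \ G) / Fintype.card N with _ | m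
  · have hleft : S \ univ.biUnion y ⊆ G := by
      rwa [hm, mul_zero, card_eq_zero, sdiff_eq_empty_iff_subset] at hcard
    rw [inter_eq_left.2 hleft] at hgood'
    obtain ⟨A, H, hA, hvA, hH, hle⟩ := exists_allocation_goods hgood'
    exact ⟨_, hy.isAllocation_union hA, hy.envyFreeable_union hA hvA,
      hy.isEF1_union_goods hnonpos hleft hA hH hle⟩
  · obtain ⟨A, H, c, hA, hvA, hH, hc, hle⟩ :=
      exists_allocation_full_rounds hgood' (hm ▸ hcard)
    exact ⟨_, hy.isAllocation_union hA, hy.envyFreeable_union hA hvA,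
      hy.isEF1_union_chores hnonpos hA hH hc hle⟩

end FirstRound

section Absorption

variable [DecidableEq I]

/-- The set of items that `B` stands for when the item `c` has been merged into the item `g`. -/
def absorb (g c : I) (B : Finset I) : Finset I :=
  if g ∈ B then insert c B else B

variable {g c : I} {S : Finset I}

lemma mem_absorb_self {B : Finset I} (hc : c ∉ B) : c ∈ absorb g c B ↔ g ∈ B := by
  unfold absorb
  split_ifs with hg <;> simp [hg, hc]

lemma mem_absorb_of_ne {B : Finset I} {t : I} (ht : t ≠ c) : t ∈ absorb g c B ↔ t ∈ B := by
  unfold absorb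
  split_ifs <;> simp [ht]

lemma sum_absorb [AddCommMonoid K] (w : I → K) {B : Finset I} (hc : c ∉ B) :
    ∑ t ∈ absorb g c B, w t = ∑ t ∈ B, update w g (w g + w c) t := by
  unfold absorb
  split_ifs with hg
  · rw [sum_insert hc, sum_update_of_mem hg, sum_eq_add_sum_sdiff_singleton_of_mem hg, ← add_assoc,
      add_comm (w c)]
  · rw [sum_update_of_notMem hg]

lemma isAllocation_absorb [Fintype N] {A : N → Finset I} (hA : IsAllocation (S.erase c) A)
    (hg : g ∈ S.erase c) (hc : c ∈ S) :
    IsAllocation S fun i ↦ absorb g c (A i) := by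
  have hcA (i : N) : c ∉ A i := fun h ↦ notMem_erase c S (hA.subset i h)
  constructor
  · intro i j hij
    refine disjoint_left.2 fun t hti htj ↦ ?_
    rcases eq_or_ne t c with rfl | ht
    · exact disjoint_left.1 (hA.disjoint hij) ((mem_absorb_self (hcA i)).1 hti)
        ((mem_absorb_self (hcA j)).1 htj)
    · exact disjoint_left.1 (hA.disjoint hij) ((mem_absorb_of_ne ht).1 hti)
        ((mem_absorb_of_ne ht).1 htj)
  · have hA_mem (t : I) : (∃ i, t ∈ A i) ↔ t ∈ S.erase c := by simp [← hA.biUnion_eq]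
    ext t
    rcases eq_or_ne t c with rfl | ht
    · simp [mem_absorb_self (hcA _), hA_mem, hg, hc]
    · simp [mem_absorb_of_ne ht, hA_mem, ht]

lemma envyFreeable_absorb [Fintype N] [AddCommMonoid K] [LE K] {v : N → I → K}
    {A : N → Finset I} (hA : EnvyFreeable (fun i ↦ update (v i) g (v i g + v i c)) A)
    (hc : ∀ i, c ∉ A i) : EnvyFreeable v fun i ↦ absorb g c (A i) := fun π ↦ by
  simpa only [sum_absorb _ (hc _)] using hA π

/- Discarding `g` rather than the merged item leaves `c` behind, which only decreases the value of
the envied bundle. -/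
lemma isEF1_absorb [AddCommGroup K] [PartialOrder K] [IsOrderedAddMonoid K] {G : Finset I}
    {v : N → I → K} {A : N → Finset I}
    (hA : IsEF1 G (fun i ↦ update (v i) g (v i g + v i c)) A) (hcA : ∀ i, c ∉ A i) (hgG : g ∈ G)
    (hcG : c ∉ G) (hc : ∀ i, v i c ≤ 0) : IsEF1 G v fun i ↦ absorb g c (A i) := by
  intro i j
  rcases hA i j with hle | ⟨t, ht, hle⟩ | ⟨t, ht, hle⟩
  · left
    rwa [sum_absorb _ (hcA i), sum_absorb _ (hcA j)]
  · obtain ⟨htA, htG⟩ := mem_sdiff.1 ht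
    have htc : t ≠ c := ne_of_mem_of_not_mem htA (hcA i)
    have htg : t ≠ g := (ne_of_mem_of_not_mem hgG htG).symm
    have ht' : t ∈ absorb g c (A i) := (mem_absorb_of_ne htc).2 htA
    refine .inr (.inl ⟨t, mem_sdiff.2 ⟨ht', htG⟩, ?_⟩)
    rw [sum_erase_eq_sub ht', sum_absorb _ (hcA i), sum_absorb _ (hcA j)]
    rw [sum_erase_eq_sub htA] at hle
    simpa only [update_of_ne htg] using hle
  · obtain ⟨htA, htG⟩ := mem_inter.1 ht
    have htc : t ≠ c := ne_of_mem_of_not_mem htG hcG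
    have ht' : t ∈ absorb g c (A j) := (mem_absorb_of_ne htc).2 htA
    have hvt : update (v i) g (v i g + v i c) t ≤ v i t := by
      rcases eq_or_ne t g with rfl | htg
      · simpa using hc i
      · rw [update_of_ne htg]
    refine .inr (.inr ⟨t, mem_inter.2 ⟨ht', htG⟩, ?_⟩)
    rw [sum_erase_eq_sub ht', sum_absorb _ (hcA i), sum_absorb _ (hcA j)]
    rw [sum_erase_eq_sub htA] at hle
    exact (sub_le_sub_left hvt _).trans hle

end Absorption

section Existence

variable [Fintype N] [DecidableEq I]

theorem exists_envyFreeable_isEF1 [Nonempty N] [AddCommGroup K] [LinearOrder K]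
    [IsOrderedAddMonoid K] {G S : Finset I} {v : N → I → K} (hgood : ∀ g ∈ S ∩ G, ∃ i, 0 < v i g)
    (hchore : ∀ i, ∀ c ∈ S \ G, v i c ≤ 0) :
    ∃ A : N → Finset I, IsAllocation S A ∧ EnvyFreeable v A ∧ IsEF1 G v A := by
  induction S using Finset.strongInduction generalizing v with
  | H S ih =>
    by_cases! hpair : ∀ i, ∀ g ∈ S ∩ G, ∀ c ∈ S \ G, v i g + v i c ≤ 0
    · exact exists_isEF1_of_pair_nonpos hgood hchore hpair
    obtain ⟨i, g, hg, c, hc, hpos⟩ := hpair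
    obtain ⟨hgS, hgG⟩ := mem_inter.1 hg
    obtain ⟨hcS, hcG⟩ := mem_sdiff.1 hc
    have hgc : g ≠ c := ne_of_mem_of_not_mem hgG hcG
    obtain ⟨A, hA, hvA, hEF1⟩ := ih (S.erase c) (erase_ssubset hcS)
      (v := fun j ↦ update (v j) g (v j g + v j c))
      (fun t ht ↦ by
        rcases eq_or_ne t g with rfl | htg
        · exact ⟨i, by rwa [update_self]⟩
        · simpa only [update_of_ne htg] using
            hgood t (inter_subset_inter_right (erase_subset c S) ht))
      (fun j t ht ↦ by
        rw [update_of_ne (ne_of_mem_of_not_mem hgG (mem_sdiff.1 ht).2).symm]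
        exact hchore j t (sdiff_subset_sdiff (erase_subset c S) le_rfl ht))
    have hcA (j : N) : c ∉ A j := fun h ↦ notMem_erase c S (hA.subset j h)
    exact ⟨fun j ↦ absorb g c (A j), isAllocation_absorb hA (mem_erase.2 ⟨hgc, hgS⟩) hcS,
      envyFreeable_absorb hvA hcA, isEF1_absorb hEF1 hcA hgG hcG fun j ↦ hchore j c hc⟩

lemma IsEF1.sum_le_or_exists_erase [AddCommMonoid K] [Preorder K] {G S : Finset I} {v : N → I → K}
    {A : N → Finset I} (hEF1 : IsEF1 G v A) (hA : IsAllocation S A) (i j : N) :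
    ∑ t ∈ A j, v i t ≤ ∑ t ∈ A i, v i t ∨
      ∃ t ∈ A i ∪ A j, ∑ s ∈ (A j).erase t, v i s ≤ ∑ s ∈ (A i).erase t, v i s := by
  rcases eq_or_ne i j with rfl | hij
  · exact .inl le_rfl
  rcases hEF1 i j with hle | ⟨t, ht, hle⟩ | ⟨t, ht, hle⟩
  · exact .inl hle
  · have htA := (mem_sdiff.1 ht).1
    refine .inr ⟨t, mem_union_left _ htA, ?_⟩
    rwa [erase_eq_of_notMem (disjoint_left.1 (hA.disjoint hij) htA)]
  · have htA := (mem_inter.1 ht).1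
    refine .inr ⟨t, mem_union_right _ htA, ?_⟩
    rwa [erase_eq_of_notMem (a := t) (s := A i) (disjoint_right.1 (hA.disjoint hij) htA)]

end Existence

end FairDivision

theorem efm_with_money_exists_general {N I K : Type*} [Fintype N] [Nonempty N] [Fintype I]
    [DecidableEq I] [Field K] [LinearOrder K] [IsStrictOrderedRing K] (u : N → I → K) {b : K}
    (hb : 0 ≤ b) :
    ∃ (A : N → Finset I) (p : N → K),
      (∀ i j, i ≠ j → Disjoint (A i) (A j)) ∧
      (Finset.univ.biUnion A = Finset.univ) ∧
      (∀ i, 0 ≤ p i) ∧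
      (∑ i, p i) = b ∧
      (∀ i j : N,
        (∑ t ∈ A i, u i t) + p i ≥ (∑ t ∈ A j, u i t) + p j ∨
          (p j = 0 ∧
            ∃ t ∈ A i ∪ A j,
              (∑ s ∈ (A i).erase t, u i s) ≥ ∑ s ∈ (A j).erase t, u i s)) := by
  let goods : Finset I := {t | ∃ i, 0 < u i t}
  obtain ⟨A, hA, huA, hEF1⟩ := FairDivision.exists_envyFreeable_isEF1 (G := goods)
    (S := Finset.univ) (v := u) (by simp [goods]) (by simp +contextual [goods])
  obtain ⟨p, hp, hsum, henvy⟩ := huA.exists_payment hb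
  refine ⟨A, p, fun i j hij ↦ hA.disjoint hij, hA.biUnion_eq, hp, hsum, fun i j ↦ ?_⟩
  rcases henvy i j with hpj | hle
  · rcases hEF1.sum_le_or_exists_erase hA i j with hle | herase
    · left
      linarith [hp i]
    · exact .inr ⟨hpj, herase⟩
  · exact .inl hle

/-- With indivisible goods and chores together with one unit of money, an EFM
allocation always exists: there are a partition `A` of the items and nonnegative payments
summing to `1` such that `{(A_i, p_i)}` is EFM with money. -/
theorem efm_with_money_exists
    (n : ℕ) (hn : 0 < n) (I : Type) [Fintype I] [DecidableEq I]
    (u : Fin n → I → ℝ) :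
    ∃ (A : Fin n → Finset I) (p : Fin n → ℝ),
      -- A is a partition of the items
      (∀ i j, i ≠ j → Disjoint (A i) (A j)) ∧
      (Finset.univ.biUnion A = Finset.univ) ∧
      -- payments are nonnegative and sum to 1
      (∀ i, 0 ≤ p i) ∧
      (∑ i, p i) = 1 ∧
      -- {(A_i, p_i)} is EFM with money
      (∀ i j : Fin n,
        (∑ t ∈ A i, u i t) + p i ≥ (∑ t ∈ A j, u i t) + p j ∨
          (p j = 0 ∧
            ∃ t ∈ A i ∪ A j,
              (∑ s ∈ (A i).erase t, u i s) ≥ ∑ s ∈ (A j).erase t, u i s)) := by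
  have : Nonempty (Fin n) := Fin.pos_iff_nonempty.1 hn
  exact efm_with_money_exists_general u zero_le_one
end

section
/- For any number n of agents with additive utilities over a finite set M of indivisible chores (every agent values every item strictly negatively) and with utilities over the cake C = [0,1] given by nonnegative integrable density functions, there exists an allocation {(A_i, C_i)}_{i∈N} of the chores and the cake that is EFM. -/
open MeasureTheory

/-!
The cake plays the role of money. Handing out the chores by successive matchings of maximum weight
yields an allocation which is fair up to one item and which no permutation of the bundles improves.
By the latter there are potentials `p`, that is, payments that remove all envy. Rescale the
utilities so that the whole cake is worth `1` to everyone, and give agent `i` a share of the cake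
of size `max 0 (p i - h)`, where the level `h` makes the shares add up to `1`, cut such that all
agents agree on the sizes of the shares. Then nobody envies an agent whose share is worth something
to them, and the fairness up to one item takes care of the other cases.

The cut exists because a finite family of measures with densities can be bisected simultaneously,
by induction on the family. If it can, then repeated bisection leads to a coordinate in which all
its measures are uniform on `[0, 1]`, and by continuity some window of length `1 / 2` in this
coordinate also bisects one further measure. Once all measures are uniform in the same coordinate,
any proportions can be realized.
-/

section Potential

variable {ι R : Type*}

/-- The total weight of the walk that starts at a given vertex and then visits the vertices of a
list in order, in the complete digraph with edge weights `w`. Maximizing it over simple walks yields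
potentials. -/
def walkWeight [AddMonoid R] (w : ι → ι → R) : ι → List ι → R
  | _, [] => 0
  | i, j :: l => w i j + walkWeight w j l

lemma walkWeight_append_cons [AddMonoid R] (w : ι → ι → R) (i k : ι) (l₁ l₂ : List ι) :
    walkWeight w i (l₁ ++ k :: l₂) = walkWeight w i (l₁ ++ [k]) + walkWeight w k l₂ := by
  induction l₁ generalizing i with
  | nil => simp [walkWeight]
  | cons j l₁ ih => simp [walkWeight, ih j, add_assoc]

lemma walkWeight_append_singleton [AddMonoid R] (w : ι → ι → R) (i k : ι) (l : List ι) :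
    walkWeight w i (l ++ [k]) = (List.zipWith w (i :: l) (l ++ [k])).sum := by
  induction l generalizing i with
  | nil => simp [walkWeight]
  | cons j l ih => simp [walkWeight, ih j]

lemma map_formPerm_cons [DecidableEq ι] {i : ι} {l : List ι} (hl : (i :: l).Nodup) :
    (i :: l).map (i :: l).formPerm = l ++ [i] := by
  have hrot : l ++ [i] = (i :: l).rotate 1 := by simp
  rw [hrot]
  refine List.ext_getElem (by simp) fun m _ _ => ?_
  rw [List.getElem_map, List.getElem_rotate, List.formPerm_apply_getElem _ hl]

lemma walkWeight_closed [DecidableEq ι] [AddCommMonoid R] (w : ι → ι → R) {i : ι} {l : List ι}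
    (hl : (i :: l).Nodup) :
    walkWeight w i (l ++ [i]) = ∑ k ∈ (i :: l).toFinset, w k ((i :: l).formPerm k) := by
  rw [walkWeight_append_singleton, ← map_formPerm_cons hl, List.zipWith_map_right,
    List.zipWith_self, List.sum_toFinset _ hl]

variable [AddCommGroup R] [LinearOrder R] [IsOrderedAddMonoid R]

-- The potential of `i` is the largest weight of a simple walk from `i`.
lemma exists_potential_of_walkWeight_closed_nonpos [Finite ι] {w : ι → ι → R}
    (hw : ∀ i l, (i :: l).Nodup → walkWeight w i (l ++ [i]) ≤ 0) :
    ∃ p : ι → R, ∀ i j, w i j + p j ≤ p i := by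
  classical
  have := Fintype.ofFinite ι
  have hmax (i : ι) : ∃ l : List ι, (i :: l).Nodup ∧
      ∀ l', (i :: l').Nodup → walkWeight w i l' ≤ walkWeight w i l := by
    have hfin : {l : List ι | (i :: l).Nodup}.Finite :=
      (Set.finite_coe_iff.1 (Finite.of_fintype {l : List ι // l.Nodup})).subset fun _ hl =>
        hl.of_cons
    exact Set.exists_max_image _ (walkWeight w i) hfin ⟨[], List.nodup_singleton i⟩
  choose l hl hmax using hmax
  refine ⟨fun i => walkWeight w i (l i), fun i j => ?_⟩
  change walkWeight w i (j :: l j) ≤ walkWeight w i (l i)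
  by_cases hi : i ∈ j :: l j
  · obtain ⟨l₁, l₂, h⟩ := List.append_of_mem hi
    have hnodup : (i :: (l₁ ++ l₂)).Nodup := List.nodup_middle.1 (h ▸ hl j)
    rw [h, walkWeight_append_cons]
    exact add_le_of_nonpos_of_le
      (hw i l₁ (hnodup.sublist ((List.sublist_append_left l₁ l₂).cons_cons i)))
      (hmax i l₂ (hnodup.sublist ((List.sublist_append_right l₁ l₂).cons_cons i)))
  · exact hmax i _ (List.nodup_cons.2 ⟨hi, hl j⟩)

/-- Bundles are handed out in an envy-freeable way when no permutation of them among the agents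
increases total utility; `V i j` is the value to agent `i` of the bundle of agent `j`. By
`IsEnvyFreeable.exists_potential` these are the allocations in which money can remove all envy. -/
def IsEnvyFreeable [Fintype ι] (V : ι → ι → R) : Prop :=
  ∀ σ : Equiv.Perm ι, ∑ i, V i (σ i) ≤ ∑ i, V i i

lemma IsEnvyFreeable.exists_potential [Fintype ι] {V : ι → ι → R} (hV : IsEnvyFreeable V) :
    ∃ p : ι → R, ∀ i j, V i j + p j ≤ V i i + p i := by
  classical
  obtain ⟨p, hp⟩ := exists_potential_of_walkWeight_closed_nonpos (w := fun i j => V i j - V i i)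
    fun i l hl => by
      rw [walkWeight_closed _ hl]
      calc ∑ k ∈ (i :: l).toFinset, (V k ((i :: l).formPerm k) - V k k)
          = ∑ k, (V k ((i :: l).formPerm k) - V k k) :=
            Finset.sum_subset (Finset.subset_univ _) fun k _ hk => by
              rw [List.formPerm_apply_of_notMem (mt List.mem_toFinset.2 hk), sub_self]
        _ ≤ 0 := by
            rw [Finset.sum_sub_distrib, sub_nonpos]
            exact hV _
  refine ⟨p, fun i j => ?_⟩
  have h := hp i j
  rwa [sub_add_eq_add_sub, sub_le_iff_le_add'] at h

end Potential

section Matching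

variable {ι J R : Type*} [Fintype ι] [AddCommGroup R] [LinearOrder R] [IsOrderedAddMonoid R]

-- A matching of maximum weight is not improved by permuting its items, nor by moving one agent to
-- an unmatched item.
lemma exists_embedding_isEnvyFreeable [DecidableEq J] (v : ι → J → R) {S : Finset J}
    (hS : Fintype.card ι ≤ S.card) :
    ∃ m : ι ↪ J, Finset.univ.map m ⊆ S ∧ IsEnvyFreeable (fun i j => v i (m j)) ∧
      ∀ i, ∀ t ∈ S \ Finset.univ.map m, v i t ≤ v i (m i) := by
  classical
  have : Nonempty (ι ↪ S) := Function.Embedding.nonempty_of_card_le (by simpa using hS)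
  obtain ⟨m, hm⟩ := Finite.exists_max fun m : ι ↪ S => ∑ i, v i (m i)
  refine ⟨m.trans (.subtype _), ?_, fun σ => hm (σ.toEmbedding.trans m), fun i t ht => ?_⟩
  · simp [Finset.subset_iff]
  · obtain ⟨htS, htm⟩ : t ∈ S ∧ ∀ k, (m k : J) ≠ t := by simpa using ht
    by_contra! hlt
    refine (hm (m.setValue i ⟨t, htS⟩)).not_gt
      (Finset.sum_lt_sum (fun k _ => ?_) ⟨i, Finset.mem_univ i, ?_⟩)
    · rcases eq_or_ne k i with rfl | hk
      · simpa using hlt.le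
      · rw [Function.Embedding.setValue_eq_of_ne hk fun h => htm k (congrArg Subtype.val h)]
    · simpa using hlt

end Matching

section Rounds

variable {ι J R : Type*} [DecidableEq ι]

/-- The value to agent `i` of the items of `S` that belong to agent `j`. Allocations of items are
encoded by the map `a` that sends an item to its owner. -/
def bundleValue [AddCommMonoid R] (v : ι → J → R) (S : Finset J) (a : J → ι) (i j : ι) : R :=
  ∑ t ∈ S with a t = j, v i t

lemma bundleValue_extend [Fintype ι] [DecidableEq J] [AddCommMonoid R] (v : ι → J → R)
    {S : Finset J} {m : ι ↪ J} (hm : Finset.univ.map m ⊆ S) (a : J → ι) (i j : ι) :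
    bundleValue v S (Function.extend m id a) i j =
      v i (m j) + bundleValue v (S \ Finset.univ.map m) a i j := by
  simp only [bundleValue, Finset.sum_filter]
  rw [← Finset.sum_sdiff hm, add_comm]
  congr 1
  · simp [m.injective.extend_apply]
  · refine Finset.sum_congr rfl fun t ht => ?_
    have htm : ¬∃ k, m k = t := by simpa using (Finset.mem_sdiff.1 ht).2
    rw [Function.extend_apply' _ _ _ htm]

lemma bundleValue_prod [Fintype ι] [Fintype J] [AddCommMonoid R] (v : ι → J → R)
    (b : J × ι → ι) (i₀ i j : ι) :
    bundleValue (fun i (l : J × ι) => if l.2 = i₀ then v i l.1 else 0) Finset.univ b i j =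
      bundleValue v Finset.univ (fun t => b (t, i₀)) i j := by
  simp only [bundleValue, Finset.sum_filter, Fintype.sum_prod_type]
  refine Finset.sum_congr rfl fun t _ => ?_
  rw [Finset.sum_eq_single i₀] <;> simp +contextual

lemma sum_erase_le_sum_erase_of_bundleValue_add_le [Fintype J] [DecidableEq J] [AddCommGroup R]
    [PartialOrder R] [IsOrderedAddMonoid R] {v : ι → J → R} {a : J → ι} {l : J} {j : ι}
    (hj : a l ≠ j)
    (h : bundleValue v Finset.univ a (a l) j + v (a l) l ≤
      bundleValue v Finset.univ a (a l) (a l)) :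
    ∑ t ∈ ({t | a t = j} : Finset J).erase l, v (a l) t ≤
      ∑ t ∈ ({t | a t = a l} : Finset J).erase l, v (a l) t := by
  rw [Finset.erase_eq_of_notMem (by simpa using hj), Finset.sum_erase_eq_sub (by simp)]
  exact le_sub_iff_add_le.2 h

variable [Fintype ι] [Nonempty ι] [AddCommGroup R] [LinearOrder R] [IsOrderedAddMonoid R]

-- Hand out the items in rounds, one item per agent in each round, by matchings of maximum weight.
-- Every agent prefers its item of one round to all items of the later rounds, so its envy is
-- bounded by shifting the rounds by one.
lemma exists_isEnvyFreeable_of_card_eq_mul (v : ι → J → R) {k : ℕ} {S : Finset J}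
    (hS : S.card = k * Fintype.card ι) :
    ∃ a : J → ι, IsEnvyFreeable (bundleValue v S a) ∧
      (S.Nonempty → ∀ i j c, (∀ t ∈ S, v i t ≤ c) → ∃ l ∈ S, a l = i ∧
        bundleValue v S a i j + v i l ≤ bundleValue v S a i i + c) := by
  classical
  induction k generalizing S with
  | zero =>
    obtain rfl : S = ∅ := by simpa using hS
    exact ⟨fun _ => Classical.arbitrary ι, by simp [IsEnvyFreeable, bundleValue], by simp⟩
  | succ k ih =>
    obtain ⟨m, hmS, hm, hbest⟩ := exists_embedding_isEnvyFreeable v (S := S) (by grind)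
    obtain ⟨a, ha, hround⟩ := ih (S := S \ Finset.univ.map m) (by
      simp [Finset.card_sdiff_of_subset hmS, hS, add_mul])
    have hext := bundleValue_extend v hmS a
    have hmem (i : ι) : m i ∈ S := hmS (by simp)
    refine ⟨Function.extend m id a, fun σ => ?_, fun _ i j c hc => ?_⟩
    · simp only [hext, Finset.sum_add_distrib]
      exact add_le_add (hm σ) (ha σ)
    · simp only [hext]
      rcases (S \ Finset.univ.map m).eq_empty_or_nonempty with hempty | hne
      · refine ⟨m i, hmem i, m.injective.extend_apply _ _ i, ?_⟩
        simp only [hempty, bundleValue, Finset.filter_empty, Finset.sum_empty, add_zero]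
        rw [add_comm]
        gcongr
        exact hc _ (hmem j)
      · obtain ⟨l, hl, rfl, hle⟩ := hround hne i j _ (hbest i)
        have hlm : ¬∃ k, m k = l := by simpa using (Finset.mem_sdiff.1 hl).2
        refine ⟨l, Finset.sdiff_subset hl, Function.extend_apply' _ _ _ hlm, ?_⟩
        calc v (a l) (m j) + bundleValue v (S \ Finset.univ.map m) a (a l) j + v (a l) l
            ≤ c + (bundleValue v (S \ Finset.univ.map m) a (a l) (a l) + v (a l) (m (a l))) := by
              rw [add_assoc]
              exact add_le_add (hc _ (hmem j)) hle
          _ = _ := by abel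

-- Pad the items with dummies of value zero, so that the rounds come out even.
lemma exists_isEnvyFreeable_ef1 [Fintype J] {v : ι → J → R} (hv : ∀ i t, v i t ≤ 0) :
    ∃ a : J → ι, IsEnvyFreeable (bundleValue v Finset.univ a) ∧
      ∀ i j, bundleValue v Finset.univ a i j ≤ bundleValue v Finset.univ a i i ∨
        ∃ l, a l = i ∧
          bundleValue v Finset.univ a i j + v i l ≤ bundleValue v Finset.univ a i i := by
  classical
  let i₀ := Classical.arbitrary ι
  obtain ⟨b, hb, hround⟩ := exists_isEnvyFreeable_of_card_eq_mul
    (fun i (l : J × ι) => if l.2 = i₀ then v i l.1 else 0) (S := Finset.univ)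
    (k := Fintype.card J) (by simp)
  have hprod := bundleValue_prod v b i₀
  refine ⟨fun t => b (t, i₀), fun σ => by simpa only [hprod] using hb σ, fun i j => ?_⟩
  cases isEmpty_or_nonempty J with
  | inl _ => simp [bundleValue]
  | inr _ =>
    obtain ⟨⟨t, k⟩, -, hl, hle⟩ := hround Finset.univ_nonempty i j 0 fun l _ => by
      split_ifs <;> simp [hv]
    simp only [hprod, add_zero] at hle
    by_cases hk : k = i₀
    · subst hk
      exact .inr ⟨t, hl, by simpa using hle⟩
    · exact .inl (by simpa [hk] using hle)

end Rounds

section Shares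

variable {ι J : Type*} [Fintype ι] [Nonempty ι]

lemma exists_sum_max_zero_sub_eq (p : ι → ℝ) {c : ℝ} (hc : 0 ≤ c) :
    ∃ h, ∑ i, max 0 (p i - h) = c := by
  obtain ⟨i₀, hi₀⟩ := Finite.exists_max p
  refine mem_range_of_exists_le_of_exists_ge (by fun_prop) ⟨p i₀, ?_⟩ ⟨p i₀ - c, ?_⟩
  · rwa [Finset.sum_eq_zero fun i _ => max_eq_left (sub_nonpos.2 (hi₀ i))]
  · calc c ≤ max 0 (p i₀ - (p i₀ - c)) := by simp
      _ ≤ _ := Finset.single_le_sum (f := fun i => max 0 (p i - (p i₀ - c)))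
        (fun _ _ => le_max_left _ _) (Finset.mem_univ i₀)

-- The cake plays the role of money: with potentials `p`, agent `i` receives the share
-- `max 0 (p i - h)`, where the level `h` is chosen so that the shares add up to the whole cake.
lemma IsEnvyFreeable.exists_shares {V : ι → ι → ℝ} (hV : IsEnvyFreeable V) :
    ∃ x : ι → ℝ, (∀ i, 0 ≤ x i) ∧ ∑ i, x i = 1 ∧
      ∀ i j, 0 < x j → V i j + x j ≤ V i i + x i := by
  obtain ⟨p, hp⟩ := hV.exists_potential
  obtain ⟨h, hh⟩ := exists_sum_max_zero_sub_eq p zero_le_one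
  refine ⟨fun i => max 0 (p i - h), fun i => le_max_left _ _, hh, fun i j hj => ?_⟩
  have hxj : max 0 (p j - h) = p j - h := max_eq_right ((lt_max_iff.1 hj).resolve_left
    (lt_irrefl 0)).le
  have hxi : p i - h ≤ max 0 (p i - h) := le_max_right _ _
  linarith [hp i j]

end Shares

section DyadicBisection

variable {α : Type*} {h : Set α → Set α}

open Classical in
/-- Bisect the space `k` times by means of `h`, where `h X` is the half of `X` that comes first. The
`2 ^ k` pieces are numbered in order from `0`, and `dyadicIndex h k y` is the number of the piece
that contains `y`. These numbers approximate `dyadicLimit`. -/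
noncomputable def dyadicIndex (h : Set α → Set α) : ℕ → α → ℕ
  | 0, _ => 0
  | k + 1, y => 2 * dyadicIndex h k y +
      if y ∈ h (dyadicIndex h k ⁻¹' {dyadicIndex h k y}) then 0 else 1

lemma dyadicIndex_succ_mem_Icc (k : ℕ) (y : α) : dyadicIndex h (k + 1) y ∈
    Set.Icc (2 * dyadicIndex h k y) (2 * dyadicIndex h k y + 1) := by
  rw [dyadicIndex]
  split_ifs <;> simp

lemma dyadicIndex_succ_preimage_two_mul (k q : ℕ) : dyadicIndex h (k + 1) ⁻¹' {2 * q} =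
    dyadicIndex h k ⁻¹' {q} ∩ h (dyadicIndex h k ⁻¹' {q}) := by
  ext y
  simp only [Set.mem_preimage, Set.mem_singleton_iff, Set.mem_inter_iff, dyadicIndex]
  grind

lemma dyadicIndex_succ_preimage_two_mul_add_one (k q : ℕ) :
    dyadicIndex h (k + 1) ⁻¹' {2 * q + 1} =
      dyadicIndex h k ⁻¹' {q} \ h (dyadicIndex h k ⁻¹' {q}) := by
  ext y
  simp only [Set.mem_preimage, Set.mem_singleton_iff, Set.mem_sdiff, dyadicIndex]
  grind

/-- The point of `[0, 1]` whose binary digits say in which half of each bisection `y` lies. Under a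
finite measure that `h` bisects, it is uniformly distributed on `[0, 1]`. -/
noncomputable def dyadicLimit (h : Set α → Set α) (y : α) : ℝ :=
  ⨆ k, (dyadicIndex h k y : ℝ) / 2 ^ k

lemma dyadicLimit_mem_Icc (k : ℕ) (y : α) : dyadicLimit h y ∈
    Set.Icc ((dyadicIndex h k y : ℝ) / 2 ^ k) ((dyadicIndex h k y + 1) / 2 ^ k) := by
  have hsucc (k : ℕ) := dyadicIndex_succ_mem_Icc (h := h) k y
  have hmono : Monotone fun k => (dyadicIndex h k y : ℝ) / 2 ^ k := by
    refine monotone_nat_of_le_succ fun k => ?_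
    have : (2 * dyadicIndex h k y : ℝ) ≤ dyadicIndex h (k + 1) y := mod_cast (hsucc k).1
    rw [div_le_div_iff₀ (by positivity) (by positivity), pow_succ]
    nlinarith [pow_pos (two_pos : (0 : ℝ) < 2) k]
  have hanti : Antitone fun k => ((dyadicIndex h k y : ℝ) + 1) / 2 ^ k := by
    refine antitone_nat_of_succ_le fun k => ?_
    have : (dyadicIndex h (k + 1) y : ℝ) ≤ 2 * dyadicIndex h k y + 1 := mod_cast (hsucc k).2
    rw [div_le_div_iff₀ (by positivity) (by positivity), pow_succ]
    nlinarith [pow_pos (two_pos : (0 : ℝ) < 2) k]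
  exact Set.mem_iInter.1 (hmono.ciSup_mem_iInter_Icc_of_antitone hanti fun k => by
    dsimp only
    gcongr
    linarith) k

lemma dyadicLimit_mem_unitInterval (y : α) : dyadicLimit h y ∈ unitInterval := by
  simpa [dyadicIndex] using dyadicLimit_mem_Icc (h := h) 0 y

variable [MeasurableSpace α]

lemma measurable_dyadicIndex (hmeas : ∀ X, MeasurableSet X → MeasurableSet (h X)) (k : ℕ) :
    Measurable (dyadicIndex h k) := by
  induction k with
  | zero => exact measurable_const
  | succ k ih =>
    refine measurable_to_countable' fun m => ?_
    have hfib (q : ℕ) : MeasurableSet (dyadicIndex h k ⁻¹' {q}) := ih (measurableSet_singleton q)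
    obtain ⟨q, rfl | rfl⟩ := Nat.even_or_odd' m
    · rw [dyadicIndex_succ_preimage_two_mul]
      exact (hfib q).inter (hmeas _ (hfib q))
    · rw [dyadicIndex_succ_preimage_two_mul_add_one]
      exact (hfib q).diff (hmeas _ (hfib q))

variable {μ : Measure α} [IsFiniteMeasure μ]

lemma measureReal_dyadicIndex_preimage_singleton (hsub : ∀ X, MeasurableSet X → h X ⊆ X)
    (hmeas : ∀ X, MeasurableSet X → MeasurableSet (h X))
    (hhalf : ∀ X, MeasurableSet X → μ (h X) = μ X / 2) {k m : ℕ} (hm : m < 2 ^ k) :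
    μ.real (dyadicIndex h k ⁻¹' {m}) = μ.real Set.univ / 2 ^ k := by
  induction k generalizing m with
  | zero =>
    obtain rfl : m = 0 := by simpa using hm
    have : dyadicIndex h 0 ⁻¹' {0} = Set.univ := by ext; simp [dyadicIndex]
    simp [this]
  | succ k ih =>
    have hfib (q : ℕ) : MeasurableSet (dyadicIndex h k ⁻¹' {q}) :=
      measurable_dyadicIndex hmeas k (measurableSet_singleton q)
    have hreal {X : Set α} (hX : MeasurableSet X) : μ.real (h X) = μ.real X / 2 := by
      simp [measureReal_def, hhalf X hX]
    rw [pow_succ] at hm ⊢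
    obtain ⟨q, rfl | rfl⟩ := Nat.even_or_odd' m
    · rw [dyadicIndex_succ_preimage_two_mul, Set.inter_eq_right.2 (hsub _ (hfib q)),
        hreal (hfib q), ih (by lia), div_div]
    · rw [dyadicIndex_succ_preimage_two_mul_add_one,
        measureReal_sdiff (hsub _ (hfib q)) (hmeas _ (hfib q)), hreal (hfib q), ih (by lia)]
      ring

lemma measureReal_dyadicIndex_lt (hsub : ∀ X, MeasurableSet X → h X ⊆ X)
    (hmeas : ∀ X, MeasurableSet X → MeasurableSet (h X))
    (hhalf : ∀ X, MeasurableSet X → μ (h X) = μ X / 2) {k N : ℕ} (hN : N ≤ 2 ^ k) :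
    μ.real {y | dyadicIndex h k y < N} = N / 2 ^ k * μ.real Set.univ := by
  have hset : {y | dyadicIndex h k y < N} = dyadicIndex h k ⁻¹' ↑(Finset.range N) := by
    ext; simp
  rw [hset, ← sum_measureReal_preimage_singleton _ fun m _ =>
      measurable_dyadicIndex hmeas k (measurableSet_singleton m),
    Finset.sum_congr rfl fun m hm => measureReal_dyadicIndex_preimage_singleton hsub hmeas hhalf
      ((Finset.mem_range.1 hm).trans_le hN), Finset.sum_const, Finset.card_range, nsmul_eq_mul]
  ring

lemma measurable_dyadicLimit (hmeas : ∀ X, MeasurableSet X → MeasurableSet (h X)) :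
    Measurable (dyadicLimit h) :=
  .iSup fun k => (measurable_from_top.comp (measurable_dyadicIndex hmeas k)).div_const _

-- Up to one piece, `{y | dyadicLimit h y ≤ t}` consists of the first `t * 2 ^ k` pieces.
lemma abs_measureReal_dyadicLimit_le_sub_le (hsub : ∀ X, MeasurableSet X → h X ⊆ X)
    (hmeas : ∀ X, MeasurableSet X → MeasurableSet (h X))
    (hhalf : ∀ X, MeasurableSet X → μ (h X) = μ X / 2) {t : ℝ} (ht : t ∈ Set.Ico 0 1) (k : ℕ) :
    |μ.real {y | dyadicLimit h y ≤ t} - t * μ.real Set.univ| ≤ μ.real Set.univ / 2 ^ k := by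
  set c := μ.real Set.univ
  have hpow : (0 : ℝ) < 2 ^ k := by positivity
  set N := ⌊t * 2 ^ k⌋₊
  have hNle : N ≤ t * 2 ^ k := Nat.floor_le (mul_nonneg ht.1 hpow.le)
  have hltN : t * 2 ^ k < N + 1 := Nat.lt_floor_add_one _
  have hN : N + 1 ≤ 2 ^ k := by exact_mod_cast hNle.trans_lt (mul_lt_of_lt_one_left hpow ht.2)
  have hlower : N / 2 ^ k * c ≤ μ.real {y | dyadicLimit h y ≤ t} := by
    rw [← measureReal_dyadicIndex_lt hsub hmeas hhalf (Nat.le_of_succ_le hN)]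
    refine measureReal_mono fun y (hy : dyadicIndex h k y + 1 ≤ N) => ?_
    refine (dyadicLimit_mem_Icc k y).2.trans ((div_le_iff₀ hpow).2 (le_trans ?_ hNle))
    exact_mod_cast hy
  have hupper : μ.real {y | dyadicLimit h y ≤ t} ≤ (N + 1 : ℕ) / 2 ^ k * c := by
    rw [← measureReal_dyadicIndex_lt hsub hmeas hhalf hN]
    refine measureReal_mono fun y (hy : dyadicLimit h y ≤ t) => ?_
    exact_mod_cast ((div_le_iff₀ hpow).1 ((dyadicLimit_mem_Icc k y).1.trans hy)).trans_lt hltN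
  have hNdiv : N / 2 ^ k ≤ t := (div_le_iff₀ hpow).2 hNle
  have hdivN : t ≤ N / 2 ^ k + 1 / 2 ^ k := by
    rw [← add_div, le_div_iff₀ hpow]
    exact hltN.le
  have hc : 0 ≤ c := measureReal_nonneg
  rw [Nat.cast_add_one, add_div] at hupper
  rw [abs_sub_le_iff, div_eq_mul_one_div, mul_comm c]
  constructor <;> nlinarith

lemma measureReal_dyadicLimit_le (hsub : ∀ X, MeasurableSet X → h X ⊆ X)
    (hmeas : ∀ X, MeasurableSet X → MeasurableSet (h X))
    (hhalf : ∀ X, MeasurableSet X → μ (h X) = μ X / 2) {t : ℝ} (ht : t ∈ unitInterval) :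
    μ.real {y | dyadicLimit h y ≤ t} = t * μ.real Set.univ := by
  rcases ht.2.eq_or_lt with rfl | ht1
  · have : {y | dyadicLimit h y ≤ 1} = Set.univ :=
      Set.eq_univ_of_forall fun y => (dyadicLimit_mem_unitInterval y).2
    rw [this, one_mul]
  have herror := abs_measureReal_dyadicLimit_le_sub_le hsub hmeas hhalf ⟨ht.1, ht1⟩
  have hlim : Filter.Tendsto (fun k : ℕ => μ.real Set.univ / 2 ^ k) Filter.atTop (nhds 0) :=
    tendsto_const_nhds.div_atTop (tendsto_pow_atTop_atTop_of_one_lt one_lt_two)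
  exact sub_eq_zero.1 (abs_nonpos_iff.1 (ge_of_tendsto' hlim herror))

end DyadicBisection

section Bisection

variable {α : Type*} [MeasurableSpace α]

/-- Every measurable set can be cut into two pieces, on which all measures of the family agree that
they have equal size. By `IsBisectable.exists_measurable_map_eq` this allows perfect divisions in
arbitrary proportions. -/
def IsBisectable (M : Set (Measure α)) : Prop :=
  ∀ X, MeasurableSet X → ∃ Y ⊆ X, MeasurableSet Y ∧ ∀ μ ∈ M, μ Y = μ X / 2

lemma IsBisectable.restrict {M : Set (Measure α)} (hM : IsBisectable M) {X : Set α}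
    (hX : MeasurableSet X) : IsBisectable ((·.restrict X) '' M) := by
  intro Z hZ
  obtain ⟨Y, hYZ, hY, hhalf⟩ := hM (Z ∩ X) (hZ.inter hX)
  refine ⟨Y, hYZ.trans Set.inter_subset_left, hY, ?_⟩
  rintro _ ⟨μ, hμ, rfl⟩
  rw [Measure.restrict_apply hY, Measure.restrict_apply hZ,
    Set.inter_eq_left.2 (hYZ.trans Set.inter_subset_right), hhalf μ hμ]

lemma IsBisectable.exists_measurable_map_eq_volume {M : Set (Measure α)} (hM : IsBisectable M)
    (hfin : ∀ μ ∈ M, IsFiniteMeasure μ) :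
    ∃ G : α → unitInterval, Measurable G ∧ ∀ μ ∈ M, μ.map G = μ Set.univ • volume := by
  choose! h hsub hmeas hhalf using hM
  have hG : Measurable fun y : α =>
      (⟨dyadicLimit h y, dyadicLimit_mem_unitInterval y⟩ : unitInterval) :=
    (measurable_dyadicLimit hmeas).subtype_mk
  refine ⟨_, hG, fun μ hμ => ?_⟩
  have := hfin μ hμ
  refine Measure.ext_of_Iic _ _ fun t => ?_
  have ht := measureReal_dyadicLimit_le hsub hmeas (fun X hX => hhalf X hX μ hμ) t.2
  rw [Measure.map_apply hG measurableSet_Iic, Measure.smul_apply, unitInterval.volume_Iic,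
    smul_eq_mul, mul_comm, ← ofReal_measureReal (μ := μ) (s := Set.univ),
    ← ENNReal.ofReal_mul t.2.1, ← ht, ofReal_measureReal]
  rfl

lemma IsBisectable.exists_measurable_map_eq_volume_restrict {M : Set (Measure α)}
    (hM : IsBisectable M) (hfin : ∀ μ ∈ M, IsFiniteMeasure μ) :
    ∃ G : α → ℝ, Measurable G ∧ ∀ μ ∈ M, μ.map G = μ Set.univ • volume.restrict unitInterval := by
  obtain ⟨G, hG, hmap⟩ := hM.exists_measurable_map_eq_volume hfin
  refine ⟨_, measurable_subtype_coe.comp hG, fun μ hμ => ?_⟩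
  rw [← Measure.map_map measurable_subtype_coe hG, hmap μ hμ, Measure.map_smul,
    unitInterval.measurePreserving_coe.map_eq]

end Bisection

section RealLine

variable (μ : Measure ℝ) [IsFiniteMeasure μ] [NullSingletonClass μ]

lemma continuous_measureReal_Iic : Continuous fun t => μ.real (Set.Iic t) := by
  refine continuous_iff_continuousAt.2 fun t => ?_
  have h : ContinuousOn (fun b => ∫ _ in Set.Iic b, (1 : ℝ) ∂μ) (Set.Iic (t + 1)) :=
    (integrable_const _).integrableOn.continuousOn_Iic_primitive_Iic
  simpa using h.continuousAt (Iic_mem_nhds (lt_add_one t))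

lemma exists_measureReal_Iic_eq_half : ∃ t, μ.real (Set.Iic t) = μ.real Set.univ / 2 := by
  rcases (measureReal_nonneg (μ := μ) (s := Set.univ)).eq_or_lt with hzero | hpos
  · exact ⟨0, by rw [← hzero, zero_div, measureReal_mono_null (Set.subset_univ _) hzero.symm]⟩
  have htop : Filter.Tendsto (fun t => μ.real (Set.Iic t)) Filter.atTop (nhds (μ.real Set.univ)) :=
    (ENNReal.tendsto_toReal (measure_ne_top μ _)).comp (tendsto_measure_Iic_atTop μ)
  have hbot : Filter.Tendsto (fun t => μ.real (Set.Iic t)) Filter.atBot (nhds 0) := by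
    have hempty : ⋂ t : ℝ, Set.Iic t = ∅ :=
      iInter_Iic_eq_empty_iff.2 (by simp)
    have h := tendsto_measure_iInter_atBot (μ := μ) (s := fun t : ℝ => Set.Iic t)
      (fun _ => measurableSet_Iic.nullMeasurableSet) (fun _ _ => Set.Iic_subset_Iic.2)
      ⟨0, measure_ne_top μ _⟩
    rw [hempty, measure_empty] at h
    exact (ENNReal.tendsto_toReal ENNReal.zero_ne_top).comp h
  exact mem_range_of_exists_le_of_exists_ge (continuous_measureReal_Iic μ)
    (hbot.eventually_le_const (half_pos hpos)).exists
    (htop.eventually_const_le (half_lt_self hpos)).exists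

lemma isBisectable_singleton : IsBisectable {μ} := by
  intro X hX
  obtain ⟨t, ht⟩ := exists_measureReal_Iic_eq_half (μ.restrict X)
  refine ⟨Set.Iic t ∩ X, Set.inter_subset_right, measurableSet_Iic.inter hX, ?_⟩
  rintro _ rfl
  rw [measureReal_restrict_apply measurableSet_Iic, measureReal_restrict_apply_univ] at ht
  rw [← ENNReal.toReal_eq_toReal_iff' (by finiteness) (by finiteness)]
  simpa [measureReal_def] using ht

-- The windows `Ioc 0 2⁻¹` and `Ioc 2⁻¹ 1` cannot both be too small or both too large.
lemma exists_measureReal_Ioc_add_half_eq : ∃ t ∈ Set.Icc (0 : ℝ) 2⁻¹,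
    μ.real (Set.Ioc t (t + 2⁻¹)) = μ.real (Set.Ioc 0 1) / 2 := by
  have hIoc {a b : ℝ} (hab : a ≤ b) :
      μ.real (Set.Ioc a b) = μ.real (Set.Iic b) - μ.real (Set.Iic a) := by
    rw [← Set.Iic_sdiff_Iic, measureReal_sdiff (Set.Iic_subset_Iic.2 hab) measurableSet_Iic]
  have hcont : Continuous fun t : ℝ => μ.real (Set.Ioc t (t + 2⁻¹)) := by
    have hIic := continuous_measureReal_Iic μ
    simp only [hIoc (le_add_of_nonneg_right (by norm_num : (0 : ℝ) ≤ 2⁻¹))]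
    exact (hIic.comp (continuous_add_const 2⁻¹)).sub hIic
  have hsum : μ.real (Set.Ioc 0 2⁻¹) + μ.real (Set.Ioc 2⁻¹ 1) = μ.real (Set.Ioc 0 1) := by
    rw [hIoc (by norm_num), hIoc (by norm_num), hIoc zero_le_one]
    ring
  have hmem : μ.real (Set.Ioc 0 1) / 2 ∈ Set.uIcc (μ.real (Set.Ioc (0 : ℝ) (0 + 2⁻¹)))
      (μ.real (Set.Ioc (2⁻¹ : ℝ) (2⁻¹ + 2⁻¹))) := by
    rw [zero_add, show (2⁻¹ + 2⁻¹ : ℝ) = 1 by norm_num, Set.mem_uIcc]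
    grind
  obtain ⟨t, ht, h⟩ := intermediate_value_uIcc hcont.continuousOn hmem
  exact ⟨t, by rwa [Set.uIcc_of_le (by norm_num)] at ht, h⟩

end RealLine

section ExactDivision

variable {α : Type*} [MeasurableSpace α] {M : Set (Measure α)} {ν : Measure α}

-- Coordinates on `X` in which every measure of `M` becomes uniform on `[0, 1]` turn the task into
-- that of finding a window of length `2⁻¹` which has half of the remaining measure.
lemma IsBisectable.insert_of_absolutelyContinuous (hM : IsBisectable M)
    (hfin : ∀ κ ∈ M, IsFiniteMeasure κ) (hν : ν ∈ M) {μ : Measure α} [IsFiniteMeasure μ]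
    (hμν : μ ≪ ν) : IsBisectable (insert μ M) := by
  intro X hX
  obtain ⟨G, hG, hmap⟩ := (hM.restrict hX).exists_measurable_map_eq_volume_restrict
    (Set.forall_mem_image.2 fun κ hκ => have := hfin κ hκ; inferInstance)
  have hmap {κ : Measure α} (hκ : κ ∈ M) :
      (κ.restrict X).map G = κ X • volume.restrict (Set.Icc 0 1) := by
    simpa using hmap _ (Set.mem_image_of_mem _ hκ)
  let m := (μ.restrict X).map G
  have hac : m ≪ volume.restrict (Set.Icc 0 1) :=
    ((hμν.restrict X).map hG).trans (hmap hν ▸ Measure.smul_absolutelyContinuous)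
  have : NullSingletonClass m := ⟨fun x => hac (measure_singleton x)⟩
  obtain ⟨t, ht, hwindow⟩ := exists_measureReal_Ioc_add_half_eq m
  refine ⟨G ⁻¹' Set.Ioc t (t + 2⁻¹) ∩ X, Set.inter_subset_right,
    (hG measurableSet_Ioc).inter hX, fun κ hκ => ?_⟩
  rw [← Measure.restrict_apply (hG measurableSet_Ioc), ← Measure.map_apply hG measurableSet_Ioc]
  rcases hκ with rfl | hκ
  · have hcompl : m (Set.Ioc 0 1)ᶜ = 0 := by
      refine hac ?_
      rw [← Measure.restrict_congr_set Ioc_ae_eq_Icc]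
      simp [Measure.restrict_apply measurableSet_Ioc.compl]
    have huniv : m (Set.Ioc 0 1) = κ X := by
      rw [measure_of_measure_compl_eq_zero hcompl, Measure.map_apply hG .univ]
      simp
    rw [← huniv, ← ENNReal.toReal_eq_toReal_iff' (by finiteness) (by finiteness)]
    simpa [measureReal_def] using hwindow
  · have hsub : Set.Ioc t (t + 2⁻¹) ⊆ Set.Icc 0 1 := by
      refine fun y hy => ⟨ht.1.trans hy.1.le, ?_⟩
      linarith [hy.2, ht.2]
    rw [hmap hκ, Measure.smul_apply, Measure.restrict_apply measurableSet_Ioc,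
      Set.inter_eq_left.2 hsub, Real.volume_Ioc, add_sub_cancel_left]
    simp [div_eq_mul_inv]

lemma IsBisectable.insert_finite_of_absolutelyContinuous (hν : IsBisectable {ν})
    [IsFiniteMeasure ν] (hM : M.Finite) (hfin : ∀ μ ∈ M, IsFiniteMeasure μ)
    (hac : ∀ μ ∈ M, μ ≪ ν) : IsBisectable (insert ν M) := by
  induction M, hM using Set.Finite.induction_on with
  | empty => simpa using hν
  | @insert μ M _ _ ih =>
    rw [Set.forall_mem_insert] at hfin hac
    have := hfin.1
    rw [Set.insert_comm]
    exact (ih hfin.2 hac.2).insert_of_absolutelyContinuous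
      (Set.forall_mem_insert.2 ⟨inferInstance, hfin.2⟩) (Set.mem_insert ν M) hac.1

lemma IsBisectable.exists_measurable_map_eq (hM : IsBisectable M)
    (hfin : ∀ μ ∈ M, IsFiniteMeasure μ) {β : Type*} [Nonempty β] [MeasurableSpace β]
    [StandardBorelSpace β] (P : Measure β) [IsProbabilityMeasure P] :
    ∃ g : α → β, Measurable g ∧ ∀ μ ∈ M, μ.map g = μ Set.univ • P := by
  obtain ⟨G, hG, hmap⟩ := hM.exists_measurable_map_eq_volume hfin
  obtain ⟨q, hq, hqP⟩ := P.exists_measurable_map_eq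
  refine ⟨q ∘ G, hq.comp hG, fun μ hμ => ?_⟩
  rw [← Measure.map_map hq hG, hmap μ hμ, Measure.map_smul, hqP]

-- The pieces are encoded by the map that sends a point of the cake to its owner.
lemma IsBisectable.exists_perfect_division {ι : Type*} [Fintype ι] [Nonempty ι]
    [MeasurableSpace ι] [DiscreteMeasurableSpace ι] (hν : IsBisectable {ν}) [IsFiniteMeasure ν]
    {f : ι → α → ℝ} (hf_nonneg : ∀ i y, 0 ≤ f i y) (hf_int : ∀ i, Integrable (f i) ν)
    {x : ι → ℝ} (hx : ∀ i, 0 ≤ x i) (hx_sum : ∑ i, x i = 1) :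
    ∃ o : α → ι, Measurable o ∧ ∀ i j, ∫ y in o ⁻¹' {j}, f i y ∂ν = x j * ∫ y, f i y ∂ν := by
  let κ (i : ι) : Measure α := ν.withDensity fun y => ENNReal.ofReal (f i y)
  have hκ (i : ι) : IsFiniteMeasure (κ i) := isFiniteMeasure_withDensity_ofReal (hf_int i).2
  have hκ_real (i : ι) {s : Set α} (hs : MeasurableSet s) :
      (κ i).real s = ∫ y in s, f i y ∂ν := by
    rw [measureReal_def, withDensity_apply _ hs, integral_eq_lintegral_of_nonneg_ae
      (.of_forall (hf_nonneg i)) (hf_int i).1.restrict]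
  let P : Measure ι := ∑ i, ENNReal.ofReal (x i) • Measure.dirac i
  have hP : IsProbabilityMeasure P := ⟨by
    simp [P, ← ENNReal.ofReal_sum_of_nonneg fun i _ => hx i, hx_sum]⟩
  have hPj (j : ι) : P.real {j} = x j := by
    classical
    simp [P, measureReal_def, Measure.finsetSum_apply, Set.indicator_apply, hx]
  have hM : IsBisectable (insert ν (Set.range κ)) :=
    hν.insert_finite_of_absolutelyContinuous (Set.finite_range κ) (Set.forall_mem_range.2 hκ)
      (Set.forall_mem_range.2 fun _ => withDensity_absolutelyContinuous _ _)
  obtain ⟨o, ho, hmap⟩ := hM.exists_measurable_map_eq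
    (Set.forall_mem_insert.2 ⟨inferInstance, Set.forall_mem_range.2 hκ⟩) P
  refine ⟨o, ho, fun i j => ?_⟩
  have hj : MeasurableSet {j} := .of_discrete
  rw [← hκ_real i (ho hj), ← map_measureReal_apply ho hj,
    hmap _ (Set.mem_insert_of_mem ν (Set.mem_range_self i)), measureReal_ennreal_smul_apply,
    hPj, ← setIntegral_univ, ← hκ_real i .univ, mul_comm, measureReal_def]

end ExactDivision

section MixedDivision

variable {ι J : Type*} [Fintype ι] [Nonempty ι] [Fintype J]

-- Normalize the utilities so that the whole cake is worth `1` to everyone. Agents to whom the cake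
-- is worthless only need the allocation of the items to be fair up to one item.
lemma exists_allocation_shares [DecidableEq ι] {u : ι → J → ℝ} (hu : ∀ i t, u i t ≤ 0) {c : ι → ℝ}
    (hc : ∀ i, 0 ≤ c i) :
    ∃ (a : J → ι) (x : ι → ℝ), (∀ i, 0 ≤ x i) ∧ ∑ i, x i = 1 ∧ ∀ i j,
      bundleValue u Finset.univ a i j + x j * c i ≤ bundleValue u Finset.univ a i i + x i * c i ∨
        x j * c i = 0 ∧ ∃ l, a l = i ∧
          bundleValue u Finset.univ a i j + u i l ≤ bundleValue u Finset.univ a i i := by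
  have hscale (i : ι) : ∃ s > 0, c i ≠ 0 → c i * s = 1 := by
    rcases (hc i).eq_or_lt' with hi | hi
    · exact ⟨1, one_pos, fun h => absurd hi h⟩
    · exact ⟨(c i)⁻¹, inv_pos.2 hi, mul_inv_cancel₀⟩
  choose s hs hcs using hscale
  obtain ⟨a, ha, hef1⟩ := exists_isEnvyFreeable_ef1 (v := fun i t => s i * u i t) fun i t =>
    mul_nonpos_of_nonneg_of_nonpos (hs i).le (hu i t)
  obtain ⟨x, hx, hx_sum, hfair⟩ := ha.exists_shares
  simp only [bundleValue, ← Finset.mul_sum, ← mul_add, mul_le_mul_iff_right₀ (hs _)] at hef1 hfair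
  refine ⟨a, x, hx, hx_sum, fun i j => ?_⟩
  by_cases hji : x j * c i = 0
  · refine (hef1 i j).imp (fun hle => ?_) fun hle => ⟨hji, hle⟩
    rw [hji, add_zero]
    exact hle.trans (le_add_of_nonneg_right (mul_nonneg (hx i) (hc i)))
  · obtain ⟨hj, hi⟩ := mul_ne_zero_iff.1 hji
    have h := mul_le_mul_of_nonneg_left (hfair i j ((hx j).lt_of_ne' hj)) (hc i)
    simp only [mul_add, ← mul_assoc, hcs i hi, one_mul] at h
    rw [mul_comm (x j), mul_comm (x i)]
    exact .inl h

theorem efm_exists_chores_and_cake_general [DecidableEq J] {α : Type*} [MeasurableSpace α]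
    {u : ι → J → ℝ} {ν : Measure α} {K : Set α} {f : ι → α → ℝ} (hK : MeasurableSet K)
    [IsFiniteMeasure (ν.restrict K)] (hν : IsBisectable {ν.restrict K})
    (hf_nonneg : ∀ i y, 0 ≤ f i y) (hf_int : ∀ i, IntegrableOn (f i) K ν)
    (hu : ∀ i t, u i t ≤ 0) :
    ∃ (A : ι → Finset J) (C : ι → Set α),
      (∀ i j, i ≠ j → Disjoint (A i) (A j)) ∧ Finset.univ.biUnion A = Finset.univ ∧
      (∀ i, MeasurableSet (C i)) ∧ (∀ i j, i ≠ j → Disjoint (C i) (C j)) ∧ ⋃ i, C i = K ∧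
      ∀ i j, ∑ t ∈ A i, u i t + ∫ y in C i, f i y ∂ν ≥ ∑ t ∈ A j, u i t + ∫ y in C j, f i y ∂ν ∨
        ∫ y in C j, f i y ∂ν = 0 ∧ ∃ t ∈ A i ∪ A j,
          ∑ s ∈ (A i).erase t, u i s ≥ ∑ s ∈ (A j).erase t, u i s := by
  classical
  let _ : MeasurableSpace ι := ⊤
  obtain ⟨a, x, hx, hx_sum, hfair⟩ := exists_allocation_shares hu
    (c := fun i => ∫ y in K, f i y ∂ν) fun i => integral_nonneg (hf_nonneg i)
  obtain ⟨o, ho, hdiv⟩ := hν.exists_perfect_division hf_nonneg hf_int hx hx_sum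
  have hmeas (i : ι) : MeasurableSet (o ⁻¹' {i}) := ho .of_discrete
  refine ⟨fun i => {t | a t = i}, fun i => o ⁻¹' {i} ∩ K, fun i j hij => ?_, by ext; simp,
    fun i => (hmeas i).inter hK, fun i j hij => ?_, ?_, fun i j => ?_⟩
  · exact Finset.disjoint_filter.2 fun t _ hi hj => hij (hi.symm.trans hj)
  · exact ((Set.disjoint_singleton.2 hij).preimage o).mono Set.inter_subset_left
      Set.inter_subset_left
  · rw [← Set.iUnion_inter, ← Set.preimage_iUnion, Set.iUnion_of_singleton, Set.preimage_univ,
      Set.univ_inter]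
  · simp only [← Measure.restrict_restrict (hmeas _), hdiv]
    rcases eq_or_ne i j with rfl | hij
    · exact .inl le_rfl
    · refine (hfair i j).imp_right fun ⟨hzero, l, hl, hle⟩ => ⟨hzero, l, by simp [hl], ?_⟩
      subst hl
      exact sum_erase_le_sum_erase_of_bundleValue_add_le hij hle

end MixedDivision

/-- With indivisible chores (every agent values every item strictly
negatively) and cake utilities given by nonnegative integrable
densities on `[0,1]`, an EFM allocation always exists. -/
theorem efm_exists_chores_and_cake
    (n : ℕ) (hn : 0 < n) (I : Type) [Fintype I] [DecidableEq I]
    (u : Fin n → I → ℝ)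
    (f : Fin n → ℝ → ℝ)
    (hf_nonneg : ∀ i x, 0 ≤ f i x)
    (hf_int : ∀ i, IntegrableOn (f i) (Set.Icc (0 : ℝ) 1))
    (hchores : ∀ (i : Fin n) (t : I), u i t < 0) :
    ∃ (A : Fin n → Finset I) (C : Fin n → Set ℝ),
      -- (A_1, …, A_n) is a partition of the items
      (∀ i j, i ≠ j → Disjoint (A i) (A j)) ∧
      (Finset.univ.biUnion A = Finset.univ) ∧
      -- (C_1, …, C_n) is a measurable partition of the cake [0,1]
      (∀ i, MeasurableSet (C i)) ∧
      (∀ i j, i ≠ j → Disjoint (C i) (C j)) ∧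
      ((⋃ i, C i) = Set.Icc (0 : ℝ) 1) ∧
      -- EFM
      (∀ i j : Fin n,
        (∑ t ∈ A i, u i t) + (∫ x in C i, f i x) ≥
            (∑ t ∈ A j, u i t) + (∫ x in C j, f i x) ∨
          ((∫ x in C j, f i x) = 0 ∧
            ∃ t ∈ A i ∪ A j,
              (∑ s ∈ (A i).erase t, u i s) ≥ ∑ s ∈ (A j).erase t, u i s)) := by
  have : Nonempty (Fin n) := ⟨⟨0, hn⟩⟩
  exact efm_exists_chores_and_cake_general measurableSet_Icc (isBisectable_singleton _) hf_nonneg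
    hf_int fun i t => (hchores i t).le
end
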